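/- Let q be an odd prime power and let (n(g))_{g ≥ 1} be a sequence of even positive integers satisfying n(g) ≥ 3·log_q(g) for all large g and n(g)/g^{2/3} → 0 as g → ∞. Then, as g → ∞, the quantity (n(g)·q^{−n(g)/2} / |F_g|) · Σ_{P monic irreducible, deg P = n(g)} Σ_{(f1,f2,f3) ∈ F_g} χ_P(f1·f2) tends to 0, where |F_g| denotes the cardinality of F_g. -/

import Mathlib

open Polynomial Classical

noncomputable section

/-- Quadratic character of a field `K`: 1 on nonzero squares, -1 on nonsquares, 0 at 0. -/
def quadCharFn (K : Type*) [Field K] (a : K) : ℤ :=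
  if a = 0 then 0 else if IsSquare a then 1 else -1

/-- Quadratic residue symbol modulo `P`: 1 if `F` is a nonzero square mod `P`,
-1 if a nonsquare, 0 if `P ∣ F`. -/
def chiP {Fq : Type*} [Field Fq] (P F : Fq[X]) : ℤ :=
  if P ∣ F then 0 else if ∃ G, P ∣ (F - G ^ 2) then 1 else -1

/-- The genus function `L(d1,d2,d3)`. -/
def Lg (d1 d2 d3 : ℕ) : ℕ :=
  if Even (d1 + d3) ∧ Even (d2 + d3) then d1 + d2 + d3 else d1 + d2 + d3 + 1

/-- The parameter set `F̂_g` of triples of square-free pairwise coprime polynomials,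
`f3` monic, satisfying the genus condition and avoiding the degenerate degrees. -/
def FhatSet (Fq : Type*) [Field Fq] (g : ℕ) : Set (Fq[X] × Fq[X] × Fq[X]) :=
  {t | Squarefree t.1 ∧ Squarefree t.2.1 ∧ Squarefree t.2.2 ∧
       IsCoprime t.1 t.2.1 ∧ IsCoprime t.1 t.2.2 ∧ IsCoprime t.2.1 t.2.2 ∧
       t.2.2.Monic ∧
       Lg t.1.natDegree t.2.1.natDegree t.2.2.natDegree = g + 3 ∧
       ({t.1.natDegree, t.2.1.natDegree, t.2.2.natDegree} : Multiset ℕ) ≠ {g + 3, 0, 0} ∧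
       ({t.1.natDegree, t.2.1.natDegree, t.2.2.natDegree} : Multiset ℕ) ≠ {g + 2, 0, 0}}

/-- The parameter set `F_g`: triples in `F̂_g` with all three polynomials monic. -/
def FSet (Fq : Type*) [Field Fq] (g : ℕ) : Set (Fq[X] × Fq[X] × Fq[X]) :=
  {t | t ∈ FhatSet Fq g ∧ t.1.Monic ∧ t.2.1.Monic}

end

open Polynomial Classical

namespace Stp

variable {K : Type*} [Field K]

lemma hasse_pow (f : K[X]) (M k : ℕ) : ∃ c : K[X], c.natDegree ≤ k * (f.natDegree - 1) ∧
    f ^ k * hasseDeriv k (f ^ M) = f ^ M * c := by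
  induction M generalizing k with
  | zero =>
    rcases Nat.eq_zero_or_pos k with rfl | hk
    · exact ⟨1, by simp, by simp⟩
    · refine ⟨0, by simp, ?_⟩
      rw [pow_zero, ← C_1, hasseDeriv_C _ _ hk]; simp
  | succ M ih =>
    choose c hc1 hc2 using ih
    let e : ℕ → K[X] := fun j => if j = 0 then 1 else f ^ (j - 1) * hasseDeriv j f
    have he : ∀ j, f ^ j * hasseDeriv j f = f * e j := by
      intro j
      rcases j with _ | j
      · simp [e]
      · simp [e, pow_succ]; ring
    have hed : ∀ j, (e j).natDegree ≤ j * (f.natDegree - 1) := by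
      intro j
      rcases j with _ | j
      · simp [e]
      · simp only [e, Nat.add_eq_zero_iff, one_ne_zero, and_false, if_false, Nat.add_sub_cancel]
        by_cases hz : f.natDegree < j + 1
        · rw [hasseDeriv_eq_zero_of_lt_natDegree _ _ hz]; simp
        · refine natDegree_mul_le.trans ?_
          have h1 := natDegree_hasseDeriv_le f (j+1)
          have h2 : (f ^ j).natDegree = j * f.natDegree := by simp
          rw [h2]
          obtain ⟨d, hd⟩ : ∃ d, f.natDegree = d + (j + 1) := ⟨f.natDegree - (j+1), by omega⟩
          rw [hd] at h1 ⊢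
          rw [Nat.add_sub_cancel] at h1
          have : d + (j+1) - 1 = d + j := by omega
          rw [this]; nlinarith
    refine ⟨∑ ij ∈ Finset.HasAntidiagonal.antidiagonal k, c ij.1 * e ij.2, ?_, ?_⟩
    · refine natDegree_sum_le_of_forall_le _ _ ?_
      intro ij hij
      rw [Finset.HasAntidiagonal.mem_antidiagonal] at hij
      refine natDegree_mul_le.trans ?_
      rw [← hij, add_mul]
      exact add_le_add (hc1 _) (hed _)
    · rw [pow_succ f M, hasseDeriv_mul, Finset.mul_sum, Finset.mul_sum]
      refine Finset.sum_congr rfl ?_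
      intro ij hij
      rw [Finset.HasAntidiagonal.mem_antidiagonal] at hij
      rw [← hij, pow_add]
      calc _ = (f ^ ij.1 * hasseDeriv ij.1 (f^M)) * (f ^ ij.2 * hasseDeriv ij.2 f) := by ring
        _ = _ := by rw [hc2, he]; ring

/-- degree-controlled linear operator computing Hasse derivatives of `f^M * s`. -/
lemma exists_op (f : K[X]) (hf : 1 ≤ f.natDegree) (M : ℕ) : ∃ S : ℕ → K[X] →ₗ[K] K[X],
    (∀ k D s, s ∈ degreeLT K D → S k s ∈ degreeLT K (D + k * (f.natDegree - 1))) ∧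
    ∀ k s, f ^ k * hasseDeriv k (f ^ M * s) = f ^ M * S k s := by
  choose c hc1 hc2 using hasse_pow f M
  refine ⟨fun k => ∑ ij ∈ Finset.HasAntidiagonal.antidiagonal k,
    (LinearMap.mulLeft K (c ij.1 * f ^ ij.2)) ∘ₗ hasseDeriv ij.2, ?_, ?_⟩
  · intro k D s hs
    rw [LinearMap.sum_apply]
    refine Submodule.sum_mem _ ?_
    intro ij hij
    rw [Finset.HasAntidiagonal.mem_antidiagonal] at hij
    simp only [LinearMap.comp_apply, LinearMap.mulLeft_apply]
    rw [mem_degreeLT]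
    by_cases hz : hasseDeriv ij.2 s = 0
    · rw [hz, mul_zero, degree_zero]; exact WithBot.bot_lt_coe _
    have hsz : s ≠ 0 := by rintro rfl; simp at hz
    have hsd : s.natDegree < D := by
      rw [mem_degreeLT] at hs
      exact (natDegree_lt_iff_degree_lt hsz).2 hs
    have hd : ij.2 ≤ s.natDegree := by
      by_contra h
      exact hz (hasseDeriv_eq_zero_of_lt_natDegree _ _ (not_le.1 h))
    refine lt_of_le_of_lt degree_le_natDegree ?_
    rw [Nat.cast_lt]
    refine lt_of_le_of_lt natDegree_mul_le ?_
    have h1 := natDegree_hasseDeriv_le s ij.2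
    have h2 : (c ij.1 * f ^ ij.2).natDegree ≤ ij.1 * (f.natDegree - 1) + ij.2 * f.natDegree :=
      natDegree_mul_le.trans (add_le_add (hc1 _) (by simp))
    obtain ⟨d, hd'⟩ : ∃ d, f.natDegree = d + 1 := ⟨f.natDegree - 1, by omega⟩
    rw [hd'] at h2 ⊢
    rw [← hij]
    simp only [Nat.add_sub_cancel] at *
    have : ij.2 * (d+1) = ij.2 * d + ij.2 := by ring
    rw [add_mul]; omega
  · intro k s
    rw [hasseDeriv_mul, LinearMap.sum_apply, Finset.mul_sum, Finset.mul_sum]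
    refine Finset.sum_congr rfl ?_
    intro ij hij
    rw [Finset.HasAntidiagonal.mem_antidiagonal] at hij
    simp only [LinearMap.comp_apply, LinearMap.mulLeft_apply]
    rw [← hij, pow_add]
    calc _ = (f ^ ij.1 * hasseDeriv ij.1 (f^M)) * (f ^ ij.2 * hasseDeriv ij.2 s) := by ring
        _ = _ := by rw [hc2]; ring

lemma exists_sol (A B : ℕ → K[X] →ₗ[K] K[X]) (D E J l : ℕ) (a : K)
    (hA : ∀ k < l, ∀ s ∈ degreeLT K D, A k s ∈ degreeLT K E)
    (hB : ∀ k < l, ∀ s ∈ degreeLT K D, B k s ∈ degreeLT K E)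
    (hlt : l * (E + J) < 2 * J * D) :
    ∃ r s : Fin J → K[X], (∀ j, r j ∈ degreeLT K D) ∧ (∀ j, s j ∈ degreeLT K D) ∧
      ¬ (∀ j, r j = 0 ∧ s j = 0) ∧
      ∀ k < l, ∑ j, (A k (r j) + C a * B k (s j)) * X ^ (j : ℕ) = 0 := by
  let V := (Fin J → degreeLT K D) × (Fin J → degreeLT K D)
  let Φ : Fin l → V →ₗ[K] K[X] := fun k => ∑ j : Fin J,
    (LinearMap.mulRight K (X ^ (j : ℕ) : K[X])) ∘ₗ
      (A k ∘ₗ (degreeLT K D).subtype ∘ₗ LinearMap.proj j ∘ₗ LinearMap.fst K _ _ +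
        a • (B k ∘ₗ (degreeLT K D).subtype ∘ₗ LinearMap.proj j ∘ₗ LinearMap.snd K _ _))
  have hΦ : ∀ k v, Φ k v = ∑ j, (A k (v.1 j) + C a * B k (v.2 j)) * X ^ (j : ℕ) := by
    intro k v
    simp only [Φ, LinearMap.sum_apply]
    refine Finset.sum_congr rfl fun j _ => ?_
    simp [smul_eq_C_mul]
    rfl
  have hmem : ∀ k v, Φ k v ∈ degreeLT K (E + J) := by
    intro k v
    rw [hΦ]
    refine Submodule.sum_mem _ fun j _ => ?_
    have h1 : A k (v.1 j) + C a * B k (v.2 j) ∈ degreeLT K E := by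
      refine Submodule.add_mem _ (hA k k.2 _ (v.1 j).2) ?_
      rw [← smul_eq_C_mul]
      exact Submodule.smul_mem _ _ (hB k k.2 _ (v.2 j).2)
    rw [mem_degreeLT] at h1 ⊢
    by_cases hz : A k (v.1 j) + C a * B k (v.2 j) = 0
    · rw [hz, zero_mul, degree_zero]; exact WithBot.bot_lt_coe _
    · have h2 := (natDegree_lt_iff_degree_lt hz).2 h1
      rw [degree_mul, degree_X_pow, degree_eq_natDegree hz]
      have := j.2
      exact_mod_cast (by omega : _ + (j:ℕ) < E + J)
  let Ψ : V →ₗ[K] (Fin l → degreeLT K (E + J)) :=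
    LinearMap.pi fun k => (Φ k).codRestrict _ (hmem k)
  have hfin : ∀ d, Module.finrank K (degreeLT K d) = d := by
    intro d
    rw [(degreeLTEquiv K d).finrank_eq]; simp
  have hfd : ∀ d, FiniteDimensional K (degreeLT K d) := fun d =>
    Module.Finite.equiv (degreeLTEquiv K d).symm
  have hker : LinearMap.ker Ψ ≠ ⊥ := by
    apply LinearMap.ker_ne_bot_of_finrank_lt
    rw [Module.finrank_pi_fintype, Module.finrank_prod, Module.finrank_pi_fintype]
    simp only [hfin]
    simp
    linarith
  obtain ⟨v, hv, hv0⟩ := (Submodule.ne_bot_iff _).1 hker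
  refine ⟨fun j => v.1 j, fun j => v.2 j, fun j => (v.1 j).2, fun j => (v.2 j).2, ?_, ?_⟩
  · intro h
    apply hv0
    refine Prod.ext ?_ ?_
    · ext1 j; exact Subtype.ext (h j).1
    · ext1 j; exact Subtype.ext (h j).2
  · intro k hk
    rw [← hΦ ⟨k, hk⟩ v]
    have h1 : Ψ v = 0 := hv
    have h2 := congrFun h1 ⟨k, hk⟩
    exact congrArg Subtype.val h2

lemma sq_ne {f a b : K[X]} {c : K} (hsf : Squarefree f) (hf : 1 ≤ f.natDegree) (hc : c ≠ 0)
    (h : a ^ 2 * f = b ^ 2 * C c) : a = 0 ∧ b = 0 := by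
  have hf0 : f ≠ 0 := by rintro rfl; simp at hf
  have hC : (C c : K[X]) ≠ 0 := by simpa using hc
  by_cases hb : b = 0
  · subst hb
    simp [hf0] at h
    exact ⟨h, rfl⟩
  exfalso
  obtain ⟨a', b', ha', hb', hg⟩ := extract_gcd a b
  set d := gcd a b with hd
  have hd0 : d ≠ 0 := by intro h0; rw [h0] at hb'; simp at hb'; exact hb hb'
  have hcop : IsCoprime a' b' := (gcd_isUnit_iff _ _).1 hg
  have h2 : a' ^ 2 * f = b' ^ 2 * C c := by
    have : d ^ 2 * (a' ^ 2 * f) = d ^ 2 * (b' ^ 2 * C c) := by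
      rw [ha', hb'] at h; linear_combination h
    exact mul_left_cancel₀ (pow_ne_zero 2 hd0) this
  have h3 : b' ^ 2 ∣ f := by
    have : IsCoprime (b' ^ 2) (a' ^ 2) := (hcop.symm.pow)
    exact this.dvd_of_dvd_mul_left ⟨_, h2⟩
  have hbu : IsUnit b' := hsf b' (by rw [← sq]; exact h3)
  have h4 : IsUnit (a' ^ 2 * f) := by
    rw [h2]; exact (hbu.pow 2).mul (isUnit_C.2 hc.isUnit)
  have h5 : IsUnit f := isUnit_of_mul_isUnit_right h4
  have := natDegree_eq_zero_of_isUnit h5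
  omega

lemma core_zero [Fintype K] {f a b : K[X]} (hodd : Fintype.card K % 2 = 1)
    (hsf : Squarefree f) (hf : 1 ≤ f.natDegree) {D : ℕ}
    (hD : 2 * D + f.natDegree ≤ Fintype.card K)
    (ha : a ∈ degreeLT K D) (hb : b ∈ degreeLT K D)
    (h : X ^ (Fintype.card K) ∣ a + b * f ^ (Fintype.card K / 2)) : a = 0 ∧ b = 0 := by
  set Q := Fintype.card K with hQ
  have hf0 : f ≠ 0 := by rintro rfl; simp at hf
  have hdeg : ∀ u : K[X], u ∈ degreeLT K D → u ≠ 0 → u.natDegree < D := by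
    intro u hu h0
    rw [mem_degreeLT] at hu
    exact (natDegree_lt_iff_degree_lt h0).2 hu
  have hfQ : (X : K[X]) ^ Q ∣ f ^ Q - C (f.coeff 0) := by
    rw [← FiniteField.expand_card f, X_pow_dvd_iff]
    intro d hd
    rw [coeff_sub, coeff_expand Fintype.card_pos, coeff_C]
    by_cases h0 : d = 0
    · subst h0; simp
    · rw [if_neg, if_neg h0, sub_zero]
      intro hdv
      exact absurd (Nat.le_of_dvd (Nat.pos_of_ne_zero h0) hdv) (by omega)
  have h1 : (X : K[X]) ^ Q ∣ a ^ 2 * f - b ^ 2 * C (f.coeff 0) := by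
    have h2 : (X : K[X]) ^ Q ∣ a ^ 2 * f - b ^ 2 * f ^ Q := by
      have : a ^ 2 * f - b ^ 2 * f ^ Q = (a + b * f ^ (Q / 2)) * ((a - b * f ^ (Q/2)) * f) := by
        have hQ2 : f ^ Q = f ^ (Q/2) * f ^ (Q/2) * f := by
          rw [← pow_add, ← pow_succ]; congr 1; omega
        rw [hQ2]; ring
      rw [this]; exact h.mul_right _
    have := dvd_add h2 (hfQ.mul_left (b ^ 2))
    convert this using 1; ring
  have h3 : a ^ 2 * f - b ^ 2 * C (f.coeff 0) = 0 := by
    by_contra hne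
    have := natDegree_le_of_dvd h1 hne
    rw [natDegree_X_pow] at this
    have ha2 : (a ^ 2 * f).natDegree < Q := by
      by_cases h0 : a = 0
      · subst h0; simp; exact Fintype.card_pos
      · have := hdeg a ha h0
        refine lt_of_le_of_lt natDegree_mul_le ?_
        have h4 : (a^2).natDegree = 2 * a.natDegree := by simp
        omega
    have hb2 : (b ^ 2 * C (f.coeff 0)).natDegree < Q := by
      by_cases h0 : b = 0
      · subst h0; simp; exact Fintype.card_pos
      · have := hdeg b hb h0
        refine lt_of_le_of_lt natDegree_mul_le ?_
        have h4 : (b^2).natDegree = 2 * b.natDegree := by simp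
        simp only [natDegree_C]
        omega
    have := natDegree_sub_le (a ^ 2 * f) (b ^ 2 * C (f.coeff 0))
    have := max_lt ha2 hb2
    omega
  by_cases hc : f.coeff 0 = 0
  · rw [hc] at h3
    simp [hf0] at h3
    refine ⟨h3, ?_⟩
    by_contra hb0
    have hbd := hdeg b hb hb0
    rw [h3, zero_add] at h
    obtain ⟨f1, hf1⟩ := X_dvd_iff.2 hc
    have hX1 : ¬ (X : K[X]) ∣ f1 := by
      rintro ⟨f2, hf2⟩
      have := hsf X ⟨f2, by rw [hf1, hf2]; ring⟩
      exact not_isUnit_X this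
    have hp : Prime (X : K[X]) := prime_X
    rw [hf1, mul_pow] at h
    have h5 : (X : K[X]) ^ (Q / 2 + 1) ∣ b * f1 ^ (Q / 2) := by
      have h6 : (X : K[X]) ^ (Q/2) * X ^ (Q/2+1) ∣ X ^ (Q/2) * (b * f1 ^ (Q/2)) := by
        rw [← pow_add]
        have : Q / 2 + (Q/2+1) = Q := by omega
        rw [this]
        convert h using 1; ring
      exact (mul_dvd_mul_iff_left (pow_ne_zero _ X_ne_zero)).1 h6
    have h7 : (X : K[X]) ^ (Q / 2 + 1) ∣ b := by
      refine (IsCoprime.pow ?_).dvd_of_dvd_mul_right h5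
      exact (hp.irreducible.coprime_iff_not_dvd).2 hX1
    have := natDegree_le_of_dvd h7 hb0
    rw [natDegree_X_pow] at this
    omega
  · exact sq_ne hsf hf hc (sub_eq_zero.1 h3)

end Stp

open Polynomial Classical

namespace Stp

variable {K : Type*} [Field K] [Fintype K]

lemma X_pow_card_sub (x : K) : (X : K[X]) ^ Fintype.card K - C x = (X - C x) ^ Fintype.card K := by
  obtain ⟨p, hp⟩ := CharP.exists K
  obtain ⟨k, hpp, hk⟩ := FiniteField.card K p
  haveI : Fact p.Prime := ⟨hpp⟩
  haveI : CharP K[X] p := inferInstance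
  rw [hk, sub_pow_char_pow, ← C_pow, ← hk, FiniteField.pow_card]

lemma count (f : K[X]) (hodd : Fintype.card K % 2 = 1)
    (hsf : Squarefree f) (hf : 1 ≤ f.natDegree) (a : K) (D J l : ℕ)
    (hD : 2 * D + f.natDegree ≤ Fintype.card K) (hl : l ≤ Fintype.card K)
    (hlt : l * (D + l * (f.natDegree - 1) + J) < 2 * J * D) :
    l * (Finset.univ.filter fun x : K => f.eval x ≠ 0 ∧ (f.eval x) ^ (Fintype.card K / 2) = a).card
      ≤ D + f.natDegree * (Fintype.card K / 2) + J * Fintype.card K := by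
  set Q := Fintype.card K with hQ
  obtain ⟨R, hR1, hR2⟩ := exists_op f hf 0
  obtain ⟨S, hS1, hS2⟩ := exists_op f hf (Q / 2)
  have hmono : ∀ k < l, (degreeLT K (D + k * (f.natDegree - 1))) ≤
      degreeLT K (D + l * (f.natDegree - 1)) := by
    intro k hk
    apply degreeLT_mono
    have := Nat.mul_le_mul_right (f.natDegree - 1) hk.le
    omega
  obtain ⟨r, s, hr, hs, hne, hsol⟩ := exists_sol R S D (D + l * (f.natDegree - 1)) J l a
    (fun k hk u hu => hmono k hk (hR1 k D u hu)) (fun k hk u hu => hmono k hk (hS1 k D u hu)) hlt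
  set g := f ^ (Q / 2) with hg
  set P : K[X] := ∑ j : Fin J, (r j + s j * g) * X ^ ((j : ℕ) * Q) with hP
  -- nonvanishing
  have hP0 : P ≠ 0 := by
    intro h0
    apply hne
    have key : ∀ i : ℕ, ∀ hi : i < J, r ⟨i, hi⟩ = 0 ∧ s ⟨i, hi⟩ = 0 := by
      intro i
      induction i using Nat.strong_induction_on with
      | _ i ih =>
        intro hi
        apply core_zero hodd hsf hf hD (hr _) (hs _)
        have h1 : (X : K[X]) ^ ((i + 1) * Q) ∣ (r ⟨i, hi⟩ + s ⟨i, hi⟩ * g) * X ^ (i * Q) := by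
          have h2 : (r ⟨i, hi⟩ + s ⟨i, hi⟩ * g) * X ^ (i * Q) =
              - ∑ j ∈ Finset.univ.erase (⟨i, hi⟩ : Fin J), (r j + s j * g) * X ^ ((j : ℕ) * Q) := by
            rw [eq_neg_iff_add_eq_zero]
            rw [Finset.add_sum_erase Finset.univ (fun j : Fin J => (r j + s j * g) * X ^ ((j : ℕ) * Q))
              (Finset.mem_univ (⟨i, hi⟩ : Fin J))]
            exact h0
          rw [h2, dvd_neg]
          refine Finset.dvd_sum fun j hj => ?_
          rcases lt_trichotomy (j : ℕ) i with h | h | h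
          · have := ih j h j.2
            rw [this.1, this.2]; simp
          · exact absurd (Fin.ext h) (Finset.ne_of_mem_erase hj)
          · exact (pow_dvd_pow _ (Nat.mul_le_mul_right Q h)).mul_left _
        rw [add_mul, pow_add, one_mul, mul_comm] at h1
        exact (mul_dvd_mul_iff_right (pow_ne_zero _ X_ne_zero)).1 h1
    intro j
    exact key j j.2
  -- degree
  have hPd : P.natDegree ≤ D + f.natDegree * (Q / 2) + J * Q := by
    refine natDegree_sum_le_of_forall_le _ _ fun j _ => ?_
    refine natDegree_mul_le.trans ?_
    rw [natDegree_X_pow]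
    have hdeg : ∀ u : K[X], u ∈ degreeLT K D → u.natDegree ≤ D := by
      intro u hu
      rw [mem_degreeLT] at hu
      exact natDegree_le_of_degree_le hu.le
    have h1 : (r j + s j * g).natDegree ≤ D + f.natDegree * (Q/2) := by
      refine (natDegree_add_le _ _).trans (max_le ((hdeg _ (hr j)).trans (by omega)) ?_)
      refine natDegree_mul_le.trans (add_le_add (hdeg _ (hs j)) ?_)
      rw [hg, natDegree_pow, mul_comm]
    have h2 : (j:ℕ) * Q ≤ J * Q := Nat.mul_le_mul_right _ j.2.le
    omega
  -- multiplicity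
  have hmul : ∀ x : K, f.eval x ≠ 0 → (f.eval x) ^ (Q / 2) = a → (X - C x) ^ l ∣ P := by
    intro x hx hxa
    set P' : K[X] := ∑ j : Fin J, (r j + s j * g) * C (x ^ (j : ℕ)) with hP'
    have h1 : (X - C x) ^ l ∣ P - P' := by
      rw [hP, hP', ← Finset.sum_sub_distrib]
      refine Finset.dvd_sum fun j _ => ?_
      rw [← mul_sub]
      refine Dvd.dvd.mul_left ?_ _
      refine (pow_dvd_pow _ hl).trans ?_
      rw [← X_pow_card_sub, mul_comm (j:ℕ), pow_mul, C_pow]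
      exact sub_dvd_pow_sub_pow _ _ _
    have h2 : (X - C x) ^ l ∣ P' := by
      rw [X_sub_C_pow_dvd_iff, X_pow_dvd_iff]
      intro k hk
      have : (P'.comp (X + C x)).coeff k = eval x (hasseDeriv k P') := by
        rw [← taylor_coeff, taylor_apply]
      rw [this]
      have h3 : (eval x f) ^ k * eval x (hasseDeriv k P') = 0 := by
        have h4 : f ^ k * hasseDeriv k P' = ∑ j : Fin J, (R k (r j) + g * S k (s j)) * C (x ^ (j:ℕ)) := by
          rw [hP', map_sum, Finset.mul_sum]
          refine Finset.sum_congr rfl fun j _ => ?_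
          have h5 := hR2 k (r j)
          have h6 := hS2 k (s j)
          rw [pow_zero, one_mul, one_mul] at h5
          rw [mul_comm _ (C _), ← smul_eq_C_mul, map_smul, map_add, smul_eq_C_mul, mul_comm (s j) g,
            ← h5, ← h6]
          ring
        rw [← eval_pow, ← eval_mul, h4, eval_finset_sum]
        have h7 := congrArg (eval x) (hsol k hk)
        rw [eval_finset_sum, eval_zero] at h7
        rw [← h7]
        refine Finset.sum_congr rfl fun j _ => ?_
        simp [hg, hxa]
      exact (mul_eq_zero.1 h3).resolve_left (pow_ne_zero _ hx)
    have := dvd_add h1 h2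
    simpa using this
  set T := Finset.univ.filter fun x : K => f.eval x ≠ 0 ∧ (f.eval x) ^ (Q / 2) = a with hT
  have hdvd : ∏ x ∈ T, (X - C x) ^ l ∣ P := by
    apply Finset.prod_dvd_of_coprime
    · intro x _ y _ hxy
      exact (isCoprime_X_sub_C_of_isUnit_sub (sub_ne_zero.2 hxy).isUnit).pow
    · intro x hx
      rw [hT, Finset.mem_filter] at hx
      exact hmul x hx.2.1 hx.2.2
  have := natDegree_le_of_dvd hdvd hP0
  rw [natDegree_prod _ _ (fun x _ => pow_ne_zero _ (X_sub_C_ne_zero x))] at this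
  simp at this
  rw [mul_comm]
  exact this.trans hPd

lemma count_bound (f : K[X]) (hodd : Fintype.card K % 2 = 1)
    (hsf : Squarefree f) (hf : 1 ≤ f.natDegree) (a : K)
    (hbig : (4 * f.natDegree + 10) ^ 2 ≤ Fintype.card K) :
    ((Finset.univ.filter fun x : K =>
        f.eval x ≠ 0 ∧ (f.eval x) ^ (Fintype.card K / 2) = a).card : ℝ)
      ≤ (Fintype.card K : ℝ) / 2 + 8 * f.natDegree * Real.sqrt (Fintype.card K) := by
  set Q := Fintype.card K with hQ
  set m := f.natDegree with hm
  set l := Nat.sqrt Q with hl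
  have hl1 : l * l ≤ Q := Nat.sqrt_le Q
  have hl2 : Q < (l + 1) * (l + 1) := Nat.lt_succ_sqrt Q
  have hl3 : 4 * m + 10 ≤ l := by
    rw [hl, Nat.le_sqrt]; rw [sq] at hbig; exact hbig
  have hlQ : l ≤ Q := Nat.sqrt_le_self Q
  obtain ⟨D, hD⟩ : ∃ D, D = (Q - m) / 2 := ⟨_, rfl⟩
  obtain ⟨J, hJ⟩ : ∃ J, J = (l + 4 * m + 2) / 2 := ⟨_, rfl⟩
  have hmQ : 4 * m + 10 ≤ Q := by omega
  have h4D : Q ≤ 4 * D := by omega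
  have hlt : l * (D + l * (m - 1) + J) < 2 * J * D := by
    obtain ⟨u, hu⟩ : ∃ u, m = u + 1 := ⟨m - 1, by omega⟩
    have hJl : J ≤ l := by omega
    have h2J : l + 4 * m + 1 ≤ 2 * J := by omega
    rw [hu, Nat.add_sub_cancel]
    have hDpos : 0 < D := by omega
    have h1 : (l + 4 * m + 1) * D ≤ 2 * J * D := Nat.mul_le_mul_right _ h2J
    have h2 : l * J ≤ l * l := Nat.mul_le_mul_left _ hJl
    have h3 : (l * l) * m ≤ 4 * D * m := Nat.mul_le_mul_right _ (hl1.trans h4D)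
    rw [hu] at h1 h3
    nlinarith
  have hc := count f hodd hsf hf a D J l (by omega) hlQ hlt
  rw [← hQ, ← hm] at hc
  set N := (Finset.univ.filter fun x : K =>
        f.eval x ≠ 0 ∧ (f.eval x) ^ (Q / 2) = a).card with hN
  have hcR : (l : ℝ) * N ≤ Q / 2 + m * Q / 2 + (l + 4 * m + 2) / 2 * Q := by
    have h1 : ((l * N : ℕ) : ℝ) ≤ ((D + m * (Q / 2) + J * Q : ℕ) : ℝ) := by exact_mod_cast hc
    push_cast at h1
    have h2 : (D : ℝ) ≤ Q / 2 := by
      have : 2 * D ≤ Q := by omega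
      have : (2 * D : ℝ) ≤ Q := by exact_mod_cast this
      linarith
    have h3 : ((Q / 2 : ℕ) : ℝ) ≤ Q / 2 := Nat.cast_div_le
    have h4 : (J : ℝ) ≤ (l + 4 * m + 2) / 2 := by
      have : 2 * J ≤ l + 4 * m + 2 := by omega
      have : (2 * J : ℝ) ≤ l + 4 * m + 2 := by exact_mod_cast this
      linarith
    have h5 : (m : ℝ) * ((Q / 2 : ℕ) : ℝ) ≤ m * (Q / 2) := by gcongr
    have h6 : (J : ℝ) * Q ≤ (l + 4 * m + 2) / 2 * Q := by gcongr
    linarith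
  have hm1 : (1 : ℝ) ≤ m := by exact_mod_cast hf
  have hlpos : (10 : ℝ) ≤ l := by
    have : 10 ≤ l := by omega
    exact_mod_cast this
  set w := Real.sqrt (Q : ℝ) with hw
  have hw2 : w * w = Q := Real.mul_self_sqrt (by positivity)
  have hw0 : 0 ≤ w := Real.sqrt_nonneg _
  have hwl : w ≤ l + 1 := by
    rw [hw, Real.sqrt_le_left (by positivity)]
    have : (Q : ℝ) < (l + 1) * (l + 1) := by exact_mod_cast hl2
    nlinarith
  have hwl' : w ≤ 2 * l := by linarith
  have hfin : (l : ℝ) * N ≤ l * (Q / 2 + 8 * m * w) := by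
    have h1 : (Q : ℝ) * (5 * m + 3) / 2 ≤ l * (8 * m * w) := by
      have h2 : (Q : ℝ) ≤ 2 * l * w := by rw [← hw2]; exact mul_le_mul_of_nonneg_right hwl' hw0
      have h3 : (5 * m + 3 : ℝ) / 2 ≤ 4 * m := by linarith
      calc (Q : ℝ) * (5 * m + 3) / 2 = Q * ((5 * m + 3) / 2) := by ring
        _ ≤ (2 * l * w) * (4 * m) := by
          apply mul_le_mul h2 h3 (by positivity) (by positivity)
        _ = _ := by ring
    nlinarith
  exact le_of_mul_le_mul_left hfin (by linarith)

theorem weil (f : K[X]) (hodd : Fintype.card K % 2 = 1)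
    (hsf : Squarefree f) (hf : 1 ≤ f.natDegree) :
    |((∑ x : K, quadraticChar K (f.eval x) : ℤ) : ℝ)| ≤
      17 * f.natDegree * Real.sqrt (Fintype.card K) := by
  set Q := Fintype.card K with hQ
  set m := f.natDegree with hm
  set w := Real.sqrt (Q : ℝ) with hw
  have hw2 : w * w = Q := Real.mul_self_sqrt (by positivity)
  have hw0 : 0 ≤ w := Real.sqrt_nonneg _
  have hm1 : (1 : ℝ) ≤ m := by exact_mod_cast hf
  have hchar : ringChar K ≠ 2 := by
    intro h
    rw [FiniteField.even_card_iff_char_two] at h; omega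
  by_cases hbig : (4 * m + 10) ^ 2 ≤ Q
  · set N1 := (Finset.univ.filter fun x : K => f.eval x ≠ 0 ∧ (f.eval x) ^ (Q / 2) = 1) with hN1
    set N2 := (Finset.univ.filter fun x : K => f.eval x ≠ 0 ∧ (f.eval x) ^ (Q / 2) = -1) with hN2
    set N0 := (Finset.univ.filter fun x : K => f.eval x = 0) with hN0
    have hb1 := count_bound f hodd hsf hf 1 hbig
    have hb2 := count_bound f hodd hsf hf (-1) hbig
    rw [← hQ, ← hm, ← hw] at hb1 hb2
    have hne : (1 : K) ≠ -1 := Ring.neg_one_ne_one_of_char_ne_two hchar |>.symm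
    have h0 : N0.card ≤ m := by
      have hsub : N0 ⊆ f.roots.toFinset := by
        intro x hx
        rw [hN0, Finset.mem_filter] at hx
        have hf0 : f ≠ 0 := hsf.ne_zero
        simpa [hf0] using hx.2
      exact (Finset.card_le_card hsub).trans ((Multiset.toFinset_card_le _).trans (card_roots' f))
    have hterm : ∀ x : K, (quadraticChar K (f.eval x) : ℤ) =
        (if x ∈ N1 then 1 else 0) - (if x ∈ N2 then 1 else 0) := by
      intro x
      by_cases hx : f.eval x = 0
      · simp [hN1, hN2, hx]
      · rw [quadraticChar_eq_pow_of_char_ne_two hchar hx, ← hQ]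
        rcases FiniteField.pow_dichotomy hchar hx with h | h <;> rw [← hQ] at h
        · simp [hN1, hN2, hx, h, hne]
        · simp [hN1, hN2, hx, h, hne.symm]
    have hone : ∀ x : K, (1 : ℕ) = (if x ∈ N1 then 1 else 0) + (if x ∈ N2 then 1 else 0) +
        (if x ∈ N0 then 1 else 0) := by
      intro x
      by_cases hx : f.eval x = 0
      · simp [hN1, hN2, hN0, hx]
      · rcases FiniteField.pow_dichotomy hchar hx with h | h <;> rw [← hQ] at h
        · simp [hN1, hN2, hN0, hx, h, hne]
        · simp [hN1, hN2, hN0, hx, h, hne.symm]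
    have hs : (∑ x : K, quadraticChar K (f.eval x) : ℤ) = (N1.card : ℤ) - N2.card := by
      rw [Finset.sum_congr rfl (fun x _ => hterm x), Finset.sum_sub_distrib]
      simp
    have ht : Q = N1.card + N2.card + N0.card := by
      have : Q = ∑ x : K, 1 := by simp [hQ]
      rw [this, Finset.sum_congr rfl (fun x _ => hone x), Finset.sum_add_distrib,
        Finset.sum_add_distrib]
      simp
    have htR : (Q : ℝ) = N1.card + N2.card + N0.card := by exact_mod_cast ht
    have h0R : (N0.card : ℝ) ≤ m := by exact_mod_cast h0
    have hw1 : 1 ≤ w := by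
      rw [hw, Real.one_le_sqrt]
      have : 1 ≤ Q := Fintype.card_pos
      exact_mod_cast this
    have hmw : (m : ℝ) ≤ m * w := by nlinarith
    rw [hs, abs_le]
    push_cast
    constructor <;> nlinarith
  · have hQm : (Q : ℝ) ≤ (14 * m) ^ 2 := by
      have h1 : Q ≤ (14 * m) ^ 2 := by
        have : (4 * m + 10) ^ 2 ≤ (14 * m) ^ 2 := Nat.pow_le_pow_left (by omega) 2
        omega
      exact_mod_cast h1
    have hwm : w ≤ 14 * m := by
      rw [hw, Real.sqrt_le_left (by positivity)]; exact hQm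
    have h1 : |((∑ x : K, quadraticChar K (f.eval x) : ℤ) : ℝ)| ≤ Q := by
      push_cast
      refine (Finset.abs_sum_le_sum_abs _ _).trans ?_
      have : (Q : ℝ) = ∑ x : K, (1 : ℝ) := by simp [hQ]
      rw [this]
      refine Finset.sum_le_sum fun x _ => ?_
      have h2 : |quadraticChar K (f.eval x)| ≤ 1 := by
        by_cases hx : f.eval x = 0
        · simp [hx]
        · rcases quadraticChar_dichotomy hx with h | h <;> simp [h]
      exact_mod_cast h2
    refine h1.trans ?_
    rw [← hw2]
    nlinarith

end Stp

open Polynomial Classical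

namespace Stp

variable {F : Type} [Field F] [Fintype F]

lemma finite_mon (d : ℕ) : {p : F[X] | p.Monic ∧ p.natDegree = d}.Finite := by
  have : Finite (degreeLT F d) := Finite.of_equiv _ (degreeLTEquiv F d).symm.toEquiv
  exact Set.finite_coe_iff.1 (Finite.of_equiv _ (monicEquivDegreeLT (R := F) d).symm)

/-- Monic polynomials of degree `d`. -/
noncomputable def Mon (F : Type) [Field F] [Fintype F] (d : ℕ) : Finset F[X] :=
  (finite_mon (F := F) d).toFinset

lemma mem_Mon {d : ℕ} {p : F[X]} : p ∈ Mon F d ↔ p.Monic ∧ p.natDegree = d := by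
  simp [Mon]

lemma card_Mon (d : ℕ) : (Mon F d).card = Fintype.card F ^ d := by
  have h1 : Nat.card {p : F[X] // p.Monic ∧ p.natDegree = d} = (Mon F d).card := by
    rw [Mon, ← Set.ncard_eq_toFinset_card _ (finite_mon d)]
    rfl
  rw [← h1, Nat.card_congr (monicEquivDegreeLT (R := F) d),
    Nat.card_congr (degreeLTEquiv F d).toEquiv]
  simp

lemma chiP_eq {K : Type*} [Field K] [Fintype K] [Algebra F K] {P : F[X]} (hP : P.Monic)
    (hPi : Irreducible P) (x : K) (hx : aeval x P = 0) (hsurj : ∀ y : K, ∃ G : F[X], aeval x G = y)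
    (f : F[X]) : chiP P f = quadraticChar K (aeval x f) := by
  have hmin : P = minpoly F x := minpoly.eq_of_irreducible_of_monic hPi hx hP
  have hdvd : ∀ G : F[X], P ∣ G ↔ aeval x G = 0 := by
    intro G; rw [hmin]; exact (minpoly.dvd_iff)
  rw [chiP, quadraticChar_apply, quadraticCharFun]
  have h1 : (∃ G, P ∣ (f - G ^ 2)) ↔ IsSquare (aeval x f) := by
    constructor
    · rintro ⟨G, hG⟩
      rw [hdvd, map_sub, map_pow, sub_eq_zero] at hG
      exact ⟨aeval x G, by rw [hG, sq]⟩
    · rintro ⟨y, hy⟩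
      obtain ⟨G, hG⟩ := hsurj y
      refine ⟨G, ?_⟩
      rw [hdvd, map_sub, map_pow, sub_eq_zero, hG, hy, sq]
  simp only [h1, hdvd f]

lemma chiP_abs_le (P f : F[X]) : |chiP P f| ≤ 1 := by
  unfold chiP
  split_ifs <;> simp

/-- the residue field -/
lemma chiP_adjoinRoot {P : F[X]} (hP : P.Monic) (hPi : Irreducible P)  :
    ∃ (K : Type) (_ : Field K) (_ : Fintype K) (_ : Algebra F K) (x : K),
      aeval x P = 0 ∧ (∀ y : K, ∃ G : F[X], aeval x G = y) ∧
      Fintype.card K = Fintype.card F ^ P.natDegree ∧ Module.finrank F K = P.natDegree := by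
  haveI : Fact (Irreducible P) := ⟨hPi⟩
  have hfd : Module.Finite F (AdjoinRoot P) := (AdjoinRoot.powerBasis hP.ne_zero).finite
  have hfin : Finite (AdjoinRoot P) := Module.finite_of_finite F
  have hrank : Module.finrank F (AdjoinRoot P) = P.natDegree := by
    rw [(AdjoinRoot.powerBasis hP.ne_zero).finrank, AdjoinRoot.powerBasis_dim]
  letI := Fintype.ofFinite (AdjoinRoot P)
  refine ⟨AdjoinRoot P, inferInstance, inferInstance, inferInstance, AdjoinRoot.root P, ?_, ?_, ?_, hrank⟩
  · rw [AdjoinRoot.aeval_eq]; simp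
  · intro y
    obtain ⟨G, hG⟩ := AdjoinRoot.mk_surjective y
    exact ⟨G, by rw [AdjoinRoot.aeval_eq, hG]⟩
  · rw [Module.card_eq_pow_finrank (K := F), hrank]

lemma chiP_mul {P : F[X]} (hP : P.Monic) (hPi : Irreducible P) (f g : F[X]) :
    chiP P (f * g) = chiP P f * chiP P g := by
  obtain ⟨K, _, _, _, x, hx, hs, -, -⟩ := chiP_adjoinRoot hP hPi
  rw [chiP_eq hP hPi x hx hs, chiP_eq hP hPi x hx hs, chiP_eq hP hPi x hx hs, map_mul, map_mul]

lemma chiP_sum_zero (hodd : Fintype.card F % 2 = 1) {P : F[X]} (hP : P.Monic) (hPi : Irreducible P)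
    {d : ℕ} (hd : P.natDegree ≤ d) : ∑ f ∈ Mon F d, chiP P f = 0 := by
  obtain ⟨K, _, _, _, x, hx, hs, hcard, -⟩ := chiP_adjoinRoot hP hPi
  have hchar : ringChar K ≠ 2 := by
    intro h
    rw [FiniteField.even_card_iff_char_two, hcard, ← Nat.even_iff, Nat.even_pow] at h
    exact absurd (Nat.even_iff.1 h.1) (by omega)
  simp only [chiP_eq hP hPi x hx hs]
  have hinv : ∀ y : K, ∑ f ∈ Mon F d, quadraticChar K (aeval x f) =
      ∑ f ∈ Mon F d, quadraticChar K (aeval x f + y) := by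
    intro y
    obtain ⟨G, hG⟩ := hs y
    -- reduce mod P
    set H := G %ₘ P with hH
    have hH1 : aeval x H = y := by
      have := congrArg (aeval x) (modByMonic_add_div G P)
      simp [hx] at this
      rw [hH, this, hG]
    have hH2 : H.degree < (d : WithBot ℕ) := by
      refine lt_of_lt_of_le (degree_modByMonic_lt G hP) ?_
      rw [degree_eq_natDegree hP.ne_zero]
      exact_mod_cast hd
    have hmem : ∀ f : F[X], ∀ H : F[X], H.degree < (d : WithBot ℕ) → f ∈ Mon F d → f + H ∈ Mon F d := by
      intro f H hH2 hf
      rw [mem_Mon] at hf ⊢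
      have hlt : H.degree < f.degree := by
        rw [degree_eq_natDegree hf.1.ne_zero, hf.2]; exact hH2
      exact ⟨hf.1.add_of_left hlt, by rw [natDegree_add_eq_left_of_degree_lt hlt, hf.2]⟩
    symm
    refine Finset.sum_bij' (fun f _ => f + H) (fun f _ => f - H) ?_ ?_ ?_ ?_ ?_
    · intro f hf; exact hmem f H hH2 hf
    · intro f hf; rw [sub_eq_add_neg]; exact hmem f (-H) (by rwa [degree_neg]) hf
    · intro f hf; simp
    · intro f hf; simp
    · intro f hf; rw [map_add (aeval x) f H, hH1]
  have h2 : (Fintype.card K : ℤ) * ∑ f ∈ Mon F d, quadraticChar K (aeval x f) = 0 := by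
    have : ∑ y : K, ∑ f ∈ Mon F d, quadraticChar K (aeval x f) =
        ∑ y : K, ∑ f ∈ Mon F d, quadraticChar K (aeval x f + y) :=
      Finset.sum_congr rfl fun y _ => hinv y
    rw [Finset.sum_const, Finset.card_univ, nsmul_eq_mul, Finset.sum_comm] at this
    rw [this]
    refine Finset.sum_eq_zero fun f _ => ?_
    rw [← quadraticChar_sum_zero hchar]
    exact Fintype.sum_equiv (Equiv.addLeft (aeval x f)) _ _ (fun y => rfl)
  rcases mul_eq_zero.1 h2 with h | h
  · have : Fintype.card K ≠ 0 := Fintype.card_ne_zero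
    exact absurd (by exact_mod_cast h) this
  · exact h

end Stp

open Polynomial Classical

namespace Stp

variable {F : Type} [Field F] [Fintype F]

/-- Monic irreducible polynomials of degree `n`. -/
noncomputable def Irr (F : Type) [Field F] [Fintype F] (n : ℕ) : Finset F[X] :=
  (Mon F n).filter fun P => Irreducible P

lemma mem_Irr {n : ℕ} {P : F[X]} : P ∈ Irr F n ↔ (P.Monic ∧ P.natDegree = n) ∧ Irreducible P := by
  rw [Irr, Finset.mem_filter, mem_Mon]

lemma surj_of_deg {K : Type} [Field K] [Fintype K] [Algebra F K] (x : K)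
    (hx : (minpoly F x).natDegree = Module.finrank F K) (y : K) : ∃ G : F[X], aeval x G = y := by
  have h1 := (Field.primitive_element_iff_minpoly_natDegree_eq F x).2 hx
  have h2 : y ∈ Algebra.adjoin F {x} := by
    rw [← IntermediateField.adjoin_simple_toSubalgebra_of_isAlgebraic
      (Algebra.IsAlgebraic.isAlgebraic x), h1]
    trivial
  rw [Algebra.adjoin_singleton_eq_range_aeval] at h2
  exact h2

lemma fiber_card {K : Type} [Field K] [Fintype K] [Algebra F K] {P : F[X]}
    (hP : P ∈ Irr F (Module.finrank F K)) :
    (Finset.univ.filter fun x : K => minpoly F x = P).card = Module.finrank F K := by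
  rw [mem_Irr] at hP
  obtain ⟨⟨hm, hd⟩, hi⟩ := hP
  obtain ⟨K', _, _, _, x', hx', -, -, hr⟩ := chiP_adjoinRoot hm hi
  obtain ⟨φ⟩ := FiniteField.nonempty_algHom_of_finrank_dvd (F := F) (K := K') (L := K)
    (by rw [hr, hd])
  have hroot : aeval (φ x') P = 0 := by rw [aeval_algHom_apply, hx', map_zero]
  have hmin : P = minpoly F (φ x') := minpoly.eq_of_irreducible_of_monic hi hroot hm
  have hsplit : Splits (P.map (algebraMap F K)) := by
    rw [hmin]; exact Normal.splits inferInstance _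
  have hsep : P.Separable := PerfectField.separable_of_irreducible hi
  have h1 := card_rootSet_eq_natDegree hsep hsplit
  rw [← hd, ← h1, ← Set.toFinset_card]
  congr 1
  ext y
  simp only [Finset.mem_filter, Finset.mem_univ, true_and, Set.mem_toFinset]
  rw [mem_rootSet_of_ne hm.ne_zero]
  constructor
  · intro h; rw [← h]; exact minpoly.aeval F y
  · intro h; exact (minpoly.eq_of_irreducible_of_monic hi h hm).symm

lemma small_deg_card {K : Type} [Field K] [Fintype K] [Algebra F K] {e : ℕ} (he : 0 < e) :
    (Finset.univ.filter fun x : K => (minpoly F x).natDegree = e).card ≤ Fintype.card F ^ e := by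
  have hq : 1 < Fintype.card F := Fintype.one_lt_card
  have h0 := FiniteField.X_pow_card_pow_sub_X_ne_zero K he.ne' hq
  have hd := FiniteField.X_pow_card_pow_sub_X_natDegree_eq K he.ne' hq
  calc _ ≤ (X ^ Fintype.card F ^ e - X : K[X]).roots.toFinset.card := by
        apply Finset.card_le_card
        intro x hx
        rw [Finset.mem_filter] at hx
        have hi := minpoly.irreducible (IsIntegral.of_finite F x)
        have h1 := (hi.natDegree_dvd_iff_dvd_X_pow_card_pow_sub_X (n := e)).1 (by rw [hx.2])
        obtain ⟨c, hc⟩ := h1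
        have h2 := congrArg (aeval x) hc
        rw [map_mul, minpoly.aeval, zero_mul, Nat.card_eq_fintype_card] at h2
        simp at h2
        rw [Multiset.mem_toFinset, mem_roots h0]
        simp [h2]
    _ ≤ _ := (Multiset.toFinset_card_le _).trans ((card_roots' _).trans hd.le)

theorem prime_sum_bound (hodd : Fintype.card F % 2 = 1) {t : ℕ} (ht : 0 < t) {f : F[X]}
    (hsf : Squarefree f) (hf : 1 ≤ f.natDegree) :
    |((2 * t : ℕ) : ℝ) * ((∑ P ∈ Irr F (2 * t), chiP P f : ℤ) : ℝ)| ≤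
      19 * f.natDegree * (Fintype.card F : ℝ) ^ t := by
  set q := Fintype.card F with hq
  have hq1 : 1 < q := Fintype.one_lt_card
  by_cases hne : (Irr F (2 * t)) = ∅
  · rw [hne]; simp; positivity
  obtain ⟨P0, hP0⟩ := Finset.nonempty_iff_ne_empty.2 hne
  have hP0' := mem_Irr.1 hP0
  obtain ⟨K, _, _, _, x0, -, -, hcard, hrank⟩ := chiP_adjoinRoot hP0'.1.1 hP0'.2
  rw [hP0'.1.2] at hcard hrank
  -- Weil
  have hKodd : Fintype.card K % 2 = 1 := by
    rw [hcard]; exact Nat.odd_iff.1 ((Nat.odd_iff.2 hodd).pow)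
  have hsf' : Squarefree (f.map (algebraMap F K)) := by
    have : f.Separable := PerfectField.separable_iff_squarefree.2 hsf
    exact this.map.squarefree
  have hW := weil (f.map (algebraMap F K)) hKodd hsf' (by rwa [natDegree_map])
  rw [natDegree_map] at hW
  have hsqrt : Real.sqrt (Fintype.card K) = (q : ℝ) ^ t := by
    rw [hcard]; push_cast
    rw [mul_comm, pow_mul, Real.sqrt_sq (by positivity)]
  rw [hsqrt] at hW
  simp only [eval_map_algebraMap] at hW
  -- split
  set χ : K → ℤ := fun x => quadraticChar K (aeval x f) with hχ
  have hχ1 : ∀ x, |χ x| ≤ 1 := by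
    intro x
    by_cases hx : aeval x f = 0
    · simp only [hχ]; rw [hx]; simp
    · simp only [hχ]; rcases quadraticChar_dichotomy hx with h | h <;> rw [h] <;> simp
  set A := Finset.univ.filter fun x : K => (minpoly F x).natDegree = 2 * t with hA
  have hsplit := Finset.sum_filter_add_sum_filter_not (Finset.univ : Finset K)
    (fun x : K => (minpoly F x).natDegree = 2 * t) χ
  have hmain : ∑ x ∈ A, χ x = ((2 * t : ℕ) : ℤ) * ∑ P ∈ Irr F (2 * t), chiP P f := by
    rw [← Finset.sum_fiberwise_of_maps_to (s := A) (t := Irr F (2 * t)) (g := fun x => minpoly F x),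
      Finset.mul_sum]
    · refine Finset.sum_congr rfl fun P hP => ?_
      have hP' := mem_Irr.1 hP
      have hfil : A.filter (fun x => minpoly F x = P) =
          Finset.univ.filter (fun x : K => minpoly F x = P) := by
        ext x
        simp only [hA, Finset.mem_filter, Finset.mem_univ, true_and, and_iff_right_iff_imp]
        rintro rfl; exact hP'.1.2
      rw [hfil]
      have hc := fiber_card (K := K) (P := P) (by rw [hrank]; exact hP)
      rw [hrank] at hc
      rw [← hc, ← nsmul_eq_mul, ← Finset.sum_const]
      refine Finset.sum_congr rfl fun x hx => ?_
      rw [Finset.mem_filter] at hx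
      have hx0 : aeval x P = 0 := by rw [← hx.2]; exact minpoly.aeval F x
      rw [chiP_eq hP'.1.1 hP'.2 x hx0]
      apply surj_of_deg
      rw [hx.2, hrank, hP'.1.2]
    · intro x hx
      rw [hA, Finset.mem_filter] at hx
      rw [mem_Irr]
      exact ⟨⟨minpoly.monic (IsIntegral.of_finite F x), hx.2⟩,
        minpoly.irreducible (IsIntegral.of_finite F x)⟩
  set B := Finset.univ.filter fun x : K => ¬ (minpoly F x).natDegree = 2 * t with hB
  have hBc : B.card ≤ 2 * q ^ t := by
    have hsub : B ⊆ (Finset.Icc 1 t).biUnion fun e =>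
        Finset.univ.filter fun x : K => (minpoly F x).natDegree = e := by
      intro x hx
      rw [hB, Finset.mem_filter] at hx
      have hint := IsIntegral.of_finite F x
      have hdvd := minpoly.degree_dvd hint
      have hpos := minpoly.natDegree_pos hint
      rw [hrank] at hdvd
      rw [Finset.mem_biUnion]
      refine ⟨_, ?_, Finset.mem_filter.2 ⟨Finset.mem_univ _, rfl⟩⟩
      rw [Finset.mem_Icc]
      refine ⟨hpos, ?_⟩
      obtain ⟨c, hc⟩ := hdvd
      have hc2 : 2 ≤ c := by
        rcases c with _ | _ | c
        · omega
        · exact absurd (by rw [hc]; ring) hx.2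
        · omega
      nlinarith
    calc B.card ≤ _ := Finset.card_le_card hsub
      _ ≤ ∑ e ∈ Finset.Icc 1 t, (Finset.univ.filter fun x : K => (minpoly F x).natDegree = e).card :=
          Finset.card_biUnion_le
      _ ≤ ∑ e ∈ Finset.Icc 1 t, q ^ e :=
          Finset.sum_le_sum fun e he => small_deg_card (by
            rw [Finset.mem_Icc] at he; omega)
      _ ≤ ∑ e ∈ Finset.range (t + 1), q ^ e := by
          apply Finset.sum_le_sum_of_subset
          intro e he
          rw [Finset.mem_Icc] at he
          rw [Finset.mem_range]; omega
      _ = ∑ e ∈ Finset.range t, q ^ e + q ^ t := Finset.sum_range_succ _ _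
      _ ≤ 2 * q ^ t := by
          have : ∑ e ∈ Finset.range t, q ^ e < q ^ t :=
            Nat.geomSum_lt hq1 (fun k hk => Finset.mem_range.1 hk)
          omega
  have hBs : |((∑ x ∈ B, χ x : ℤ) : ℝ)| ≤ 2 * (q : ℝ) ^ t := by
    have h1 : |∑ x ∈ B, χ x| ≤ (B.card : ℤ) := by
      refine (Finset.abs_sum_le_sum_abs _ _).trans ?_
      refine (Finset.sum_le_card_nsmul _ _ 1 fun x _ => hχ1 x).trans ?_
      simp
    have h2 : |∑ x ∈ B, χ x| ≤ ((2 * q ^ t : ℕ) : ℤ) := h1.trans (by exact_mod_cast hBc)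
    have h3 : ((|∑ x ∈ B, χ x| : ℤ) : ℝ) ≤ (((2 * q ^ t : ℕ) : ℤ) : ℝ) := by exact_mod_cast h2
    push_cast at h3 ⊢
    exact h3
  have hfin : (((2 * t : ℕ) : ℝ) * ((∑ P ∈ Irr F (2 * t), chiP P f : ℤ) : ℝ)) =
      ((∑ x : K, χ x : ℤ) : ℝ) - ((∑ x ∈ B, χ x : ℤ) : ℝ) := by
    rw [← hsplit, hmain]
    push_cast
    ring
  rw [hfin]
  have hm1 : (1 : ℝ) ≤ f.natDegree := by exact_mod_cast hf
  have hqt : (0 : ℝ) < (q : ℝ) ^ t := by positivity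
  calc _ ≤ |((∑ x : K, χ x : ℤ) : ℝ)| + |((∑ x ∈ B, χ x : ℤ) : ℝ)| := abs_sub _ _
    _ ≤ 17 * f.natDegree * (q:ℝ) ^ t + 2 * (q:ℝ) ^ t := add_le_add hW hBs
    _ ≤ _ := by nlinarith

end Stp

open Polynomial Classical

namespace Stp

variable {F : Type} [Field F] [Fintype F]

/-- Monic irreducible polynomials of degree at most `d`. -/
noncomputable def PP (F : Type) [Field F] [Fintype F] (d : ℕ) : Finset F[X] :=
  (Finset.range (d+1)).biUnion (Irr F)

lemma mem_PP {d : ℕ} {P : F[X]} : P ∈ PP F d ↔ P.Monic ∧ Irreducible P ∧ P.natDegree ≤ d := by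
  simp only [PP, Finset.mem_biUnion, Finset.mem_range, mem_Irr]
  constructor
  · rintro ⟨a, ha, ⟨h1, h2⟩, h3⟩; exact ⟨h1, h3, by omega⟩
  · rintro ⟨h1, h2, h3⟩; exact ⟨_, by omega, ⟨h1, rfl⟩, h2⟩

/-- Monic divisors of `R`. -/
noncomputable def Dv (R : F[X]) : Finset F[X] :=
  ((Finset.range (R.natDegree+1)).biUnion (Mon F)).filter (fun D => D ∣ R)

lemma mem_Dv {R : F[X]} (hR : R ≠ 0) {D : F[X]} : D ∈ Dv R ↔ D.Monic ∧ D ∣ R := by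
  simp only [Dv, Finset.mem_filter, Finset.mem_biUnion, Finset.mem_range, mem_Mon]
  constructor
  · rintro ⟨⟨a, ha, h1, h2⟩, h3⟩; exact ⟨h1, h3⟩
  · rintro ⟨h1, h3⟩
    exact ⟨⟨_, Nat.lt_succ_of_le (natDegree_le_of_dvd h3 hR), h1, rfl⟩, h3⟩

lemma exists_monic_irr {Q : F[X]} (hQ : Irreducible Q) :
    ∃ Q' : F[X], Q'.Monic ∧ Irreducible Q' ∧ Associated Q' Q :=
  ⟨normalize Q, monic_normalize hQ.ne_zero, (associated_normalize Q).irreducible hQ,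
    (associated_normalize Q).symm⟩

/-- sieve modulus at `Q` -/
noncomputable def eQ (R Q : F[X]) : F[X] := if Q ∣ R then Q else Q ^ 2

lemma sieve_iff {R f : F[X]} {d : ℕ} (hf : f ∈ Mon F d) :
    (Squarefree f ∧ IsCoprime f R) ↔ ∀ Q ∈ PP F d, ¬ eQ R Q ∣ f := by
  rw [mem_Mon] at hf
  obtain ⟨hm, hd⟩ := hf
  constructor
  · rintro ⟨hs, hc⟩ Q hQ hdv
    rw [mem_PP] at hQ
    unfold eQ at hdv
    split_ifs at hdv with h
    · exact hQ.2.1.not_isUnit (hc.isUnit_of_dvd' hdv h)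
    · exact hQ.2.1.not_isUnit (hs Q (by rwa [← sq]))
  · intro H
    have key : ∀ Q : F[X], Irreducible Q → Q ∣ f → (Q ∣ R ∨ Q ^ 2 ∣ f) → False := by
      intro Q hQ hQf hor
      obtain ⟨Q', hm', hi', ha'⟩ := exists_monic_irr hQ
      have h1 : Q' ∣ f := ha'.dvd.trans hQf
      refine H Q' (mem_PP.2 ⟨hm', hi', ?_⟩) ?_
      · rw [← hd]; exact natDegree_le_of_dvd h1 hm.ne_zero
      · unfold eQ
        split_ifs with h
        · exact h1
        · rcases hor with h2 | h2
          · exact absurd (ha'.dvd.trans h2) h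
          · exact (ha'.pow_pow (n := 2)).dvd.trans h2
    constructor
    · rw [squarefree_iff_irreducible_sq_not_dvd_of_ne_zero hm.ne_zero]
      intro Q hQ hdv
      exact key Q hQ ((dvd_mul_right Q Q).trans hdv) (Or.inr (by rwa [sq]))
    · apply isCoprime_of_irreducible_dvd (fun h => hm.ne_zero h.1)
      intro Q hQ h1 h2
      exact key Q hQ h1 (Or.inl h2)

lemma dvd_of_mem_prod {d : ℕ} {T : Finset F[X]} (hT : T ⊆ PP F d) {Q : F[X]} (hQ : Q ∈ PP F d) :
    Q ∣ (∏ P ∈ T, P) ↔ Q ∈ T := by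
  constructor
  · intro h
    rw [mem_PP] at hQ
    obtain ⟨P, hP, hd⟩ := (hQ.2.1.prime.dvd_finset_prod_iff _).1 h
    have h2 := mem_PP.1 (hT hP)
    rw [eq_of_monic_of_associated hQ.1 h2.1 (hQ.2.1.associated_of_dvd h2.2.1 hd)]
    exact hP
  · intro h; exact Finset.dvd_prod_of_mem _ h

lemma eQ_coprime {R P Q : F[X]} {d : ℕ} (hP : P ∈ PP F d) (hQ : Q ∈ PP F d) (hne : P ≠ Q) :
    IsCoprime (eQ R P) (eQ R Q) := by
  rw [mem_PP] at hP hQ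
  have h : IsCoprime P Q := by
    rw [hP.2.1.coprime_iff_not_dvd]
    intro h
    exact hne (eq_of_monic_of_associated hP.1 hQ.1 (hP.2.1.associated_of_dvd hQ.2.1 h))
  unfold eQ
  split_ifs
  · exact h
  · exact h.pow_right
  · exact h.pow_left
  · exact h.pow

lemma eQ_prod_dvd {R f : F[X]} {d : ℕ} {T : Finset F[X]} (hT : T ⊆ PP F d) :
    (∀ Q ∈ T, eQ R Q ∣ f) ↔ (∏ Q ∈ T, eQ R Q) ∣ f := by
  constructor
  · intro h
    apply Finset.prod_dvd_of_coprime _ h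
    intro P hP Q hQ hne
    exact eQ_coprime (hT hP) (hT hQ) hne
  · intro h Q hQ
    exact (Finset.dvd_prod_of_mem _ hQ).trans h

lemma eQ_monic {R Q : F[X]} (hQ : Q.Monic) : (eQ R Q).Monic := by
  unfold eQ; split_ifs
  · exact hQ
  · exact hQ.pow 2

/-- multiples of `E` of degree `d`. -/
lemma mult_sum (hodd : Fintype.card F % 2 = 1) {P : F[X]} (hP : P.Monic) (hPi : Irreducible P)
    {E : F[X]} (hE : E.Monic) (d : ℕ) :
    |∑ f ∈ (Mon F d).filter (fun f => E ∣ f), chiP P f| ≤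
      if E.natDegree ≤ d ∧ d < E.natDegree + P.natDegree
        then (Fintype.card F : ℤ) ^ (d - E.natDegree) else 0 := by
  by_cases h1 : E.natDegree ≤ d
  · have himg : (Mon F d).filter (fun f => E ∣ f) =
        (Mon F (d - E.natDegree)).image (fun c => E * c) := by
      ext f
      simp only [Finset.mem_filter, Finset.mem_image, mem_Mon]
      constructor
      · rintro ⟨⟨hm, hd⟩, c, rfl⟩
        have hc : c.Monic := hE.of_mul_monic_left hm
        refine ⟨c, ⟨hc, ?_⟩, rfl⟩
        rw [hE.natDegree_mul hc] at hd
        omega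
      · rintro ⟨c, ⟨hc, hd⟩, rfl⟩
        refine ⟨⟨hE.mul hc, ?_⟩, dvd_mul_right _ _⟩
        rw [hE.natDegree_mul hc]; omega
    rw [himg, Finset.sum_image (fun a _ b _ h => mul_left_cancel₀ hE.ne_zero h)]
    by_cases h2 : d < E.natDegree + P.natDegree
    · rw [if_pos ⟨h1, h2⟩]
      refine (Finset.abs_sum_le_sum_abs _ _).trans ?_
      refine (Finset.sum_le_sum (fun c _ => chiP_abs_le P (E*c))).trans ?_
      rw [Finset.sum_const, card_Mon]; simp
    · rw [if_neg (fun h => h2 h.2)]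
      simp_rw [chiP_mul hP hPi]
      rw [← Finset.mul_sum, chiP_sum_zero hodd hP hPi (by omega)]
      simp
  · rw [if_neg (fun h => h1 h.1), Finset.filter_false_of_mem]
    · simp
    · intro f hf hdv
      rw [mem_Mon] at hf
      have := natDegree_le_of_dvd hdv hf.1.ne_zero
      omega

theorem sieve_bound (hodd : Fintype.card F % 2 = 1) {P : F[X]} (hP : P.Monic) (hPi : Irreducible P)
    {R : F[X]} (hR : R ≠ 0) (d : ℕ) :
    |∑ f ∈ (Mon F d).filter (fun f => Squarefree f ∧ IsCoprime f R), chiP P f| ≤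
      ((Dv R).card : ℤ) * (d + 1) * (Fintype.card F : ℤ) ^ (d - (d - P.natDegree) / 2) := by
  have hexp : ∑ f ∈ (Mon F d).filter (fun f => Squarefree f ∧ IsCoprime f R), chiP P f
      = ∑ T ∈ (PP F d).powerset, (-1)^T.card *
        ∑ f ∈ (Mon F d).filter (fun f => (∏ Q ∈ T, eQ R Q) ∣ f), chiP P f := by
    have h1 : ∀ f ∈ Mon F d, (if Squarefree f ∧ IsCoprime f R then chiP P f else 0) =
        ∑ T ∈ (PP F d).powerset, (-1)^T.card * (if (∏ Q ∈ T, eQ R Q) ∣ f then chiP P f else 0) := by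
      intro f hf
      have h2 : (if Squarefree f ∧ IsCoprime f R then (1:ℤ) else 0) =
          ∏ Q ∈ PP F d, ((-if eQ R Q ∣ f then (1:ℤ) else 0) + 1) := by
        rw [if_congr (sieve_iff hf) rfl rfl]
        split_ifs with h
        · symm; apply Finset.prod_eq_one
          intro Q hQ; rw [if_neg (h Q hQ)]; simp
        · push Not at h
          obtain ⟨Q, hQ, hd⟩ := h
          symm; apply Finset.prod_eq_zero hQ
          rw [if_pos hd]; simp
      have h3 : (if Squarefree f ∧ IsCoprime f R then chiP P f else 0) =
        (if Squarefree f ∧ IsCoprime f R then (1:ℤ) else 0) * chiP P f := by split_ifs <;> simp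
      rw [h3, h2, Finset.prod_add, Finset.sum_mul]
      apply Finset.sum_congr rfl
      intro T hT
      rw [Finset.mem_powerset] at hT
      rw [Finset.prod_const_one, mul_one, Finset.prod_neg, mul_assoc]
      congr 1
      rw [Finset.prod_ite_zero]
      rw [if_congr (eQ_prod_dvd hT) rfl rfl]
      split_ifs <;> simp
    rw [Finset.sum_filter, Finset.sum_congr rfl h1, Finset.sum_comm]
    apply Finset.sum_congr rfl
    intro T _
    rw [← Finset.mul_sum, Finset.sum_filter]
  rw [hexp]
  set q : ℤ := (Fintype.card F : ℤ) with hq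
  have hq1 : 1 ≤ q := by rw [hq]; exact_mod_cast Fintype.card_pos
  set n := P.natDegree with hn
  let A : Finset F[X] → F[X] := fun T => ∏ Q ∈ T.filter (fun Q => ¬ Q ∣ R), Q
  let D : Finset F[X] → F[X] := fun T => ∏ Q ∈ T.filter (fun Q => Q ∣ R), Q
  let w : F[X] × F[X] → ℤ := fun x => if 2 * x.1.natDegree + x.2.natDegree ≤ d ∧
    d < 2 * x.1.natDegree + x.2.natDegree + n then
      q ^ (d - (2 * x.1.natDegree + x.2.natDegree)) else 0
  have hw0 : ∀ x, 0 ≤ w x := by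
    intro x; simp only [w]; split_ifs
    · positivity
    · exact le_rfl
  have hAm : ∀ T ⊆ PP F d, (A T).Monic := fun T hT => monic_prod_of_monic _ _
    (fun Q hQ => (mem_PP.1 (hT (Finset.mem_filter.1 hQ).1)).1)
  have hDm : ∀ T ⊆ PP F d, (D T).Monic := fun T hT => monic_prod_of_monic _ _
    (fun Q hQ => (mem_PP.1 (hT (Finset.mem_filter.1 hQ).1)).1)
  have hAD : ∀ T, D T * A T = ∏ Q ∈ T, Q := fun T =>
    Finset.prod_filter_mul_prod_filter_not T _ _
  have hE : ∀ T, (∏ Q ∈ T, eQ R Q) = D T * A T ^ 2 := by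
    intro T
    rw [← Finset.prod_filter_mul_prod_filter_not T (fun Q => Q ∣ R)]
    simp only [D, A, ← Finset.prod_pow]
    congr 1
    · apply Finset.prod_congr rfl; intro Q hQ
      rw [eQ, if_pos (Finset.mem_filter.1 hQ).2]
    · apply Finset.prod_congr rfl; intro Q hQ
      rw [eQ, if_neg (Finset.mem_filter.1 hQ).2]
  have step1 : |∑ T ∈ (PP F d).powerset, (-1)^T.card *
        ∑ f ∈ (Mon F d).filter (fun f => (∏ Q ∈ T, eQ R Q) ∣ f), chiP P f| ≤
      ∑ T ∈ (PP F d).powerset, w (A T, D T) := by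
    refine (Finset.abs_sum_le_sum_abs _ _).trans (Finset.sum_le_sum ?_)
    intro T hT
    rw [Finset.mem_powerset] at hT
    rw [abs_mul, abs_pow, abs_neg, abs_one, one_pow, one_mul]
    have hEm : (∏ Q ∈ T, eQ R Q).Monic := monic_prod_of_monic _ _
      (fun Q hQ => eQ_monic (mem_PP.1 (hT hQ)).1)
    refine (mult_sum hodd hP hPi hEm d).trans ?_
    have hdeg : (∏ Q ∈ T, eQ R Q).natDegree = 2 * (A T).natDegree + (D T).natDegree := by
      rw [hE, (hDm T hT).natDegree_mul ((hAm T hT).pow 2), (hAm T hT).natDegree_pow]; ring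
    rw [hdeg]
  refine step1.trans ?_
  have hinj : Set.InjOn (fun T => (A T, D T)) ((PP F d).powerset : Set (Finset F[X])) := by
    intro T hT T' hT' h
    simp only [Finset.coe_powerset, Set.mem_preimage, Set.mem_powerset_iff, Finset.coe_subset] at hT hT'
    simp only [Prod.mk.injEq] at h
    have h2 : ∏ Q ∈ T, Q = ∏ Q ∈ T', Q := by rw [← hAD, ← hAD, h.1, h.2]
    ext Q
    constructor
    · intro hQ
      rw [← dvd_of_mem_prod hT' (hT hQ), ← h2, dvd_of_mem_prod hT (hT hQ)]; exact hQ
    · intro hQ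
      rw [← dvd_of_mem_prod hT (hT' hQ), h2, dvd_of_mem_prod hT' (hT' hQ)]; exact hQ
  rw [← Finset.sum_image (g := fun T => (A T, D T)) (f := w) hinj]
  have step2 : ∑ x ∈ ((PP F d).powerset.image fun T => (A T, D T)), w x ≤
      ∑ x ∈ ((Finset.range (d+1)).biUnion (Mon F)) ×ˢ Dv R, w x := by
    rw [← Finset.sum_filter_ne_zero]
    apply Finset.sum_le_sum_of_subset_of_nonneg
    · intro x hx
      rw [Finset.mem_filter, Finset.mem_image] at hx
      obtain ⟨⟨T, hT, rfl⟩, hx⟩ := hx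
      rw [Finset.mem_powerset] at hT
      simp only [Finset.mem_product, Finset.mem_biUnion, Finset.mem_range, mem_Mon, mem_Dv hR]
      refine ⟨⟨(A T).natDegree, ?_, hAm T hT, rfl⟩, hDm T hT, ?_⟩
      · by_contra hcon
        apply hx
        simp only [w]
        rw [if_neg]; omega
      · apply Finset.prod_dvd_of_coprime
        · intro Q hQ Q' hQ' hne
          simp only [Finset.coe_filter, Set.mem_setOf_eq] at hQ hQ'
          have := eQ_coprime (R := R) (hT hQ.1) (hT hQ'.1) hne
          rwa [eQ, eQ, if_pos hQ.2, if_pos hQ'.2] at this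
        · intro Q hQ; exact (Finset.mem_filter.1 hQ).2
    · intro x _ _; exact hw0 x
  refine step2.trans ?_
  rw [Finset.sum_product, Finset.sum_biUnion]
  · have step3 : ∀ a ∈ Finset.range (d+1), ∑ p ∈ Mon F a, ∑ D ∈ Dv R, w (p, D) ≤
        (Dv R).card * q ^ (d - (d - n)/2) := by
      intro a _
      rw [Finset.sum_comm, ← nsmul_eq_mul]
      apply Finset.sum_le_card_nsmul
      intro D _
      have h3 : ∀ p ∈ Mon F a, w (p, D) = if 2 * a + D.natDegree ≤ d ∧
          d < 2 * a + D.natDegree + n then q ^ (d - (2 * a + D.natDegree)) else 0 := by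
        intro p hp; rw [mem_Mon] at hp; simp only [w, hp.2]
      rw [Finset.sum_congr rfl h3, Finset.sum_const, card_Mon]
      split_ifs with h
      · rw [nsmul_eq_mul]; push_cast
        rw [← hq, ← pow_add]
        exact pow_le_pow_right₀ hq1 (by omega)
      · simp only [smul_zero]; positivity
    refine (Finset.sum_le_sum step3).trans ?_
    rw [Finset.sum_const, Finset.card_range, nsmul_eq_mul]
    apply le_of_eq; push_cast; ring
  · intro a _ b _ hab
    rw [Function.onFun, Finset.disjoint_left]
    intro p hp hp'
    rw [mem_Mon] at hp hp'
    exact hab (hp.2.symm.trans hp'.2)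

end Stp

open Polynomial Classical

namespace Stp

variable {F : Type} [Field F] [Fintype F]

lemma mult_card {D : F[X]} (hD : D.Monic) {d : ℕ} (h : D.natDegree ≤ d) :
    ((Mon F d).filter (fun f => D ∣ f)).card ≤ Fintype.card F ^ (d - D.natDegree) := by
  rw [← card_Mon]
  refine (Finset.card_le_card (t := (Mon F (d - D.natDegree)).image (fun c => D * c)) ?_).trans
    Finset.card_image_le
  intro f hf
  simp only [Finset.mem_filter, mem_Mon] at hf
  obtain ⟨⟨hm, hd⟩, c, rfl⟩ := hf
  have hc : c.Monic := hD.of_mul_monic_left hm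
  rw [Finset.mem_image]
  refine ⟨c, mem_Mon.2 ⟨hc, ?_⟩, rfl⟩
  rw [hD.natDegree_mul hc] at hd
  omega

lemma sum_Dv (d : ℕ) : ∑ f ∈ Mon F d, (Dv f).card ≤ (d + 1) * Fintype.card F ^ d := by
  have h1 : ∀ f ∈ Mon F d, (Dv f).card =
      ∑ a ∈ Finset.range (d+1), ∑ D ∈ Mon F a, if D ∣ f then 1 else 0 := by
    intro f hf
    rw [mem_Mon] at hf
    rw [Dv, hf.2, Finset.card_filter, Finset.sum_biUnion]
    intro a _ b _ hab
    rw [Function.onFun, Finset.disjoint_left]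
    intro p hp hp'
    rw [mem_Mon] at hp hp'
    exact hab (hp.2.symm.trans hp'.2)
  rw [Finset.sum_congr rfl h1, Finset.sum_comm]
  have h2 : ∀ a ∈ Finset.range (d+1), ∑ f ∈ Mon F d, ∑ D ∈ Mon F a, (if D ∣ f then 1 else 0) ≤
      Fintype.card F ^ d := by
    intro a ha
    rw [Finset.mem_range] at ha
    rw [Finset.sum_comm]
    calc _ ≤ ∑ D ∈ Mon F a, Fintype.card F ^ (d - a) := by
          apply Finset.sum_le_sum
          intro D hD
          rw [mem_Mon] at hD
          rw [← Finset.card_filter, ← hD.2]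
          exact mult_card hD.1 (by omega)
      _ = _ := by
          rw [Finset.sum_const, card_Mon, smul_eq_mul, ← pow_add]
          congr 1; omega
  refine (Finset.sum_le_sum h2).trans ?_
  simp

lemma Dv_mul {f g : F[X]} (hf : f ≠ 0) (hg : g ≠ 0) :
    (Dv (f * g)).card ≤ (Dv f).card * (Dv g).card := by
  rw [← Finset.card_product]
  refine (Finset.card_le_card (t := (Dv f ×ˢ Dv g).image (fun x => x.1 * x.2)) ?_).trans
    Finset.card_image_le
  intro D hD
  rw [mem_Dv (mul_ne_zero hf hg)] at hD
  obtain ⟨hm, hd⟩ := hD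
  obtain ⟨a, b, ha, hb, hab⟩ := exists_dvd_and_dvd_of_dvd_mul hd
  have ha0 : a ≠ 0 := ne_zero_of_dvd_ne_zero hf ha
  have hb0 : b ≠ 0 := ne_zero_of_dvd_ne_zero hg hb
  rw [Finset.mem_image]
  refine ⟨(normalize a, normalize b), ?_, ?_⟩
  · rw [Finset.mem_product, mem_Dv hf, mem_Dv hg]
    exact ⟨⟨monic_normalize ha0, (associated_normalize a).symm.dvd.trans ha⟩,
      monic_normalize hb0, (associated_normalize b).symm.dvd.trans hb⟩
  · simp only
    rw [← normalize_mul, ← hab]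
    exact hm.normalize_eq_self

/-- Triples of monic squarefree pairwise coprime polynomials of prescribed degrees. -/
noncomputable def Tri (F : Type) [Field F] [Fintype F] (d1 d2 d3 : ℕ) :
    Finset (F[X] × F[X] × F[X]) :=
  (Mon F d1 ×ˢ Mon F d2 ×ˢ Mon F d3).filter fun t =>
    Squarefree t.1 ∧ Squarefree t.2.1 ∧ Squarefree t.2.2 ∧
       IsCoprime t.1 t.2.1 ∧ IsCoprime t.1 t.2.2 ∧ IsCoprime t.2.1 t.2.2

lemma mem_Tri {d1 d2 d3 : ℕ} {t : F[X] × F[X] × F[X]} : t ∈ Tri F d1 d2 d3 ↔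
    ((t.1.Monic ∧ t.1.natDegree = d1) ∧ (t.2.1.Monic ∧ t.2.1.natDegree = d2) ∧
      (t.2.2.Monic ∧ t.2.2.natDegree = d3)) ∧ Squarefree t.1 ∧ Squarefree t.2.1 ∧
      Squarefree t.2.2 ∧
       IsCoprime t.1 t.2.1 ∧ IsCoprime t.1 t.2.2 ∧ IsCoprime t.2.1 t.2.2 := by
  simp only [Tri, Finset.mem_filter, Finset.mem_product, mem_Mon]

lemma Tri_card_le (d1 d2 d3 : ℕ) : (Tri F d1 d2 d3).card ≤ Fintype.card F ^ (d1 + d2 + d3) := by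
  refine (Finset.card_filter_le _ _).trans ?_
  rw [Finset.card_product, Finset.card_product, card_Mon, card_Mon, card_Mon, ← pow_add, ← pow_add,
    add_assoc]

lemma Tri_swap (P : F[X]) (d1 d2 d3 : ℕ) :
    ∑ t ∈ Tri F d1 d2 d3, chiP P (t.1 * t.2.1) = ∑ t ∈ Tri F d2 d1 d3, chiP P (t.1 * t.2.1) := by
  apply Finset.sum_nbij' (fun t => (t.2.1, t.1, t.2.2)) (fun t => (t.2.1, t.1, t.2.2))
  · intro t ht; rw [mem_Tri] at ht ⊢
    obtain ⟨⟨a, b, c⟩, d, e, f, g, h, i⟩ := ht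
    exact ⟨⟨b, a, c⟩, e, d, f, g.symm, i, h⟩
  · intro t ht; rw [mem_Tri] at ht ⊢
    obtain ⟨⟨a, b, c⟩, d, e, f, g, h, i⟩ := ht
    exact ⟨⟨b, a, c⟩, e, d, f, g.symm, i, h⟩
  · intro t _; rfl
  · intro t _; rfl
  · intro t _; simp only; rw [mul_comm]

theorem large_bound (hodd : Fintype.card F % 2 = 1) {P : F[X]} (hP : P.Monic) (hPi : Irreducible P)
    (d1 d2 d3 : ℕ) :
    |∑ t ∈ Tri F d1 d2 d3, chiP P (t.1 * t.2.1)| ≤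
      ((d1 + 1 : ℕ) * (d2 + 1 : ℕ) * (d3 + 1 : ℕ) : ℤ) *
        (Fintype.card F : ℤ) ^ (d2 + d3 + (d1 - (d1 - P.natDegree) / 2)) := by
  have h1 : ∑ t ∈ Tri F d1 d2 d3, chiP P (t.1 * t.2.1) =
      ∑ y ∈ (Mon F d2 ×ˢ Mon F d3), if (Squarefree y.1 ∧ Squarefree y.2 ∧ IsCoprime y.1 y.2) then
        chiP P y.1 * ∑ f ∈ (Mon F d1).filter (fun f => Squarefree f ∧ IsCoprime f (y.1 * y.2)),
          chiP P f else 0 := by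
    rw [Tri, Finset.sum_filter, Finset.sum_product_right]
    apply Finset.sum_congr rfl
    intro y _
    split_ifs with h
    · rw [Finset.sum_filter, Finset.mul_sum]
      apply Finset.sum_congr rfl
      intro f _
      rw [mul_ite, mul_zero, chiP_mul hP hPi, mul_comm (chiP P y.1)]
      apply if_congr _ rfl rfl
      rw [IsCoprime.mul_right_iff]
      tauto
    · apply Finset.sum_eq_zero
      intro f _
      rw [if_neg]; tauto
  rw [h1]
  refine (Finset.abs_sum_le_sum_abs _ _).trans ?_
  have h2 : ∀ y ∈ (Mon F d2 ×ˢ Mon F d3), |if (Squarefree y.1 ∧ Squarefree y.2 ∧ IsCoprime y.1 y.2) then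
        chiP P y.1 * ∑ f ∈ (Mon F d1).filter (fun f => Squarefree f ∧ IsCoprime f (y.1 * y.2)),
          chiP P f else 0| ≤ ((Dv y.1).card : ℤ) * (Dv y.2).card * ((d1 + 1) *
          (Fintype.card F : ℤ) ^ (d1 - (d1 - P.natDegree) / 2)) := by
    intro y hy
    rw [Finset.mem_product, mem_Mon, mem_Mon] at hy
    split_ifs with h
    · rw [abs_mul]
      have := sieve_bound hodd hP hPi (mul_ne_zero hy.1.1.ne_zero hy.2.1.ne_zero) d1
      refine (mul_le_mul (chiP_abs_le P y.1) this (abs_nonneg _) zero_le_one).trans ?_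
      rw [one_mul, mul_assoc]
      apply mul_le_mul_of_nonneg_right _ (by positivity)
      exact_mod_cast Dv_mul hy.1.1.ne_zero hy.2.1.ne_zero
    · rw [abs_zero]; positivity
  refine (Finset.sum_le_sum h2).trans ?_
  rw [← Finset.sum_mul, Finset.sum_product]
  simp_rw [← Finset.mul_sum]
  rw [← Finset.sum_mul]
  have h3 : (∑ f ∈ Mon F d2, ((Dv f).card : ℤ)) ≤ (d2 + 1) * (Fintype.card F:ℤ) ^ d2 := by
    exact_mod_cast sum_Dv d2
  have h4 : (∑ f ∈ Mon F d3, ((Dv f).card : ℤ)) ≤ (d3 + 1) * (Fintype.card F:ℤ) ^ d3 := by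
    exact_mod_cast sum_Dv d3
  refine (mul_le_mul_of_nonneg_right (mul_le_mul h3 h4 (by positivity) (by positivity))
    (by positivity)).trans ?_
  apply le_of_eq
  push_cast
  rw [pow_add, pow_add]; ring

end Stp

open Polynomial Classical

namespace Stp

variable {F : Type} [Field F] [Fintype F]

/-- product of all monic irreducibles of degree at most two -/
noncomputable def MM (F : Type) [Field F] [Fintype F] : F[X] := ∏ Q ∈ PP F 2, Q

lemma MM_monic : (MM F).Monic :=
  monic_prod_of_monic _ _ (fun Q hQ => (mem_PP.1 hQ).1)

lemma MM_coprime {Q h : F[X]} (hQ : Q ∣ MM F * h + 1) : IsCoprime Q (MM F) := by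
  obtain ⟨c, hc⟩ := hQ
  exact ⟨c, -h, by rw [mul_comm c, ← hc]; ring⟩

lemma MM_deg {Q h : F[X]} (hm : Q.Monic) (hi : Irreducible Q) (hQ : Q ∣ MM F * h + 1) :
    3 ≤ Q.natDegree := by
  by_contra hlt
  have h1 : Q ∣ MM F := Finset.dvd_prod_of_mem _ (mem_PP.2 ⟨hm, hi, by omega⟩)
  exact hi.not_isUnit ((MM_coprime hQ).isUnit_of_dvd' dvd_rfl h1)

lemma MM_count {W : F[X]} (hW : W.Monic) (e : ℕ) :
    ((Mon F e).filter (fun h => W ∣ MM F * h + 1)).card ≤ Fintype.card F ^ (e - W.natDegree) := by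
  have key : ∀ h h' : F[X], W ∣ MM F * h + 1 → W ∣ MM F * h' + 1 → W ∣ h - h' := by
    intro h h' h1 h2
    have h3 : W ∣ MM F * (h - h') := by
      have := dvd_sub h1 h2
      ring_nf at this ⊢
      exact this
    exact (MM_coprime h1).dvd_of_dvd_mul_left h3
  by_cases hw : W.natDegree ≤ e
  · rw [← card_Mon]
    apply Finset.card_le_card_of_injOn (fun h => h /ₘ W)
    · intro h hh
      simp only [Finset.coe_filter, mem_Mon, Set.mem_setOf_eq] at hh
      simp only [Finset.mem_coe, mem_Mon]
      refine ⟨?_, ?_⟩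
      · rw [Monic, leadingCoeff_divByMonic_of_monic hW]
        · exact hh.1.1
        · rw [degree_eq_natDegree hW.ne_zero, degree_eq_natDegree hh.1.1.ne_zero, hh.1.2]
          exact_mod_cast hw
      · rw [natDegree_divByMonic _ hW, hh.1.2]
    · intro h hh h' hh' heq
      simp only [Finset.coe_filter, mem_Mon, Set.mem_setOf_eq] at hh hh' heq
      have h3 := key h h' hh.2 hh'.2
      have h4 : h %ₘ W = h' %ₘ W := by
        rw [← sub_eq_zero, ← sub_modByMonic]
        exact (modByMonic_eq_zero_iff_dvd hW).2 h3
      rw [← modByMonic_add_div h W, ← modByMonic_add_div h' W, heq, h4]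
  · rw [Nat.sub_eq_zero_of_le (by omega), pow_zero, Finset.card_le_one]
    intro h hh h' hh'
    simp only [Finset.mem_filter, mem_Mon] at hh hh'
    have h3 := key h h' hh.2 hh'.2
    by_contra hne
    have h4 := natDegree_le_of_dvd h3 (sub_ne_zero.2 hne)
    have h5 := natDegree_sub_le h h'
    rw [hh.1.2, hh'.1.2, max_self] at h5
    omega

lemma geo {q : ℝ} (hq : 3 ≤ q) (N : ℕ) : ∑ j ∈ Finset.range N, (q ^ (j+3))⁻¹ ≤ 1/18 := by
  have h1 : ∀ j ∈ Finset.range N, (q ^ (j+3))⁻¹ ≤ ((3:ℝ) ^ (j+3))⁻¹ := by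
    intro j _
    gcongr
  refine (Finset.sum_le_sum h1).trans ?_
  have h2 : ∀ N : ℕ, ∑ j ∈ Finset.range N, ((3:ℝ) ^ (j+3))⁻¹ = 1/18 - 1/18 * ((3:ℝ)^N)⁻¹ := by
    intro N
    induction N with
    | zero => simp
    | succ k ih =>
      rw [Finset.sum_range_succ, ih]
      field_simp
      ring
  rw [h2]
  have : 0 ≤ ((3:ℝ)^N)⁻¹ := by positivity
  linarith

lemma card_Irr_le (n : ℕ) : (Irr F n).card ≤ Fintype.card F ^ n := by
  rw [← card_Mon]; exact Finset.card_filter_le _ _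

lemma MM_natDegree {h : F[X]} {e : ℕ} (hh : h ∈ Mon F e) (he : 1 ≤ e) :
    MM F * h + 1 ∈ Mon F (e + (MM F).natDegree) := by
  rw [mem_Mon] at hh ⊢
  have h1 : (MM F * h).Monic := MM_monic.mul hh.1
  have h2 : (MM F * h).natDegree = e + (MM F).natDegree := by
    rw [MM_monic.natDegree_mul hh.1, hh.2]; ring
  have h3 : (1 : F[X]).degree < (MM F * h).degree := by
    rw [degree_one, degree_eq_natDegree h1.ne_zero, h2]
    exact_mod_cast (by omega)
  refine ⟨h1.add_of_left h3, ?_⟩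
  rw [natDegree_add_eq_left_of_degree_lt h3, h2]

lemma sqbad (hq : 3 ≤ Fintype.card F) {e : ℕ} (he : 1 ≤ e) :
    (((Mon F e).filter (fun h => ¬ Squarefree (MM F * h + 1))).card : ℝ) ≤
      (Fintype.card F : ℝ)^e / 18 + (e + (MM F).natDegree + 1 : ℕ) *
        (Fintype.card F : ℝ) ^ ((e + (MM F).natDegree)/2) := by
  set κ := (MM F).natDegree with hκ
  set q := Fintype.card F with hqd
  have hsub : (Mon F e).filter (fun h => ¬ Squarefree (MM F * h + 1)) ⊆
      ((Finset.range (e+κ+1)).filter (fun j => 2*(j+3) ≤ e+κ)).biUnion (fun j =>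
        (Irr F (j+3)).biUnion (fun Q => (Mon F e).filter (fun h => Q^2 ∣ MM F * h + 1))) := by
    intro h hh
    rw [Finset.mem_filter] at hh
    obtain ⟨hh, hs⟩ := hh
    have hM := mem_Mon.1 (MM_natDegree hh he)
    rw [squarefree_iff_irreducible_sq_not_dvd_of_ne_zero hM.1.ne_zero] at hs
    push Not at hs
    obtain ⟨Q, hQ, hd⟩ := hs
    obtain ⟨Q', hm', hi', ha'⟩ := exists_monic_irr hQ
    have h2 : Q' ^ 2 ∣ MM F * h + 1 := by
      rw [← sq] at hd
      exact (ha'.pow_pow (n := 2)).dvd.trans hd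
    have h3 := MM_deg hm' hi' ((dvd_pow_self Q' two_ne_zero).trans h2)
    have h4 := natDegree_le_of_dvd h2 hM.1.ne_zero
    rw [hm'.natDegree_pow, hM.2, ← hκ] at h4
    simp only [Finset.mem_biUnion, Finset.mem_filter, Finset.mem_range, mem_Irr]
    exact ⟨Q'.natDegree - 3, ⟨by omega, by omega⟩, Q', ⟨⟨hm', by omega⟩, hi'⟩, hh, h2⟩
  have h1 : ((Mon F e).filter (fun h => ¬ Squarefree (MM F * h + 1))).card ≤
      ∑ j ∈ (Finset.range (e+κ+1)).filter (fun j => 2*(j+3) ≤ e+κ),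
        q^(j+3) * q ^ (e - 2*(j+3)) := by
    refine (Finset.card_le_card hsub).trans (Finset.card_biUnion_le.trans (Finset.sum_le_sum ?_))
    intro j _
    refine Finset.card_biUnion_le.trans ((Finset.sum_le_card_nsmul _ _ (q ^ (e - 2*(j+3))) ?_).trans ?_)
    · intro Q hQ
      rw [mem_Irr] at hQ
      have := MM_count (hQ.1.1.pow 2) e
      rwa [hQ.1.1.natDegree_pow, hQ.1.2] at this
    · rw [smul_eq_mul]
      exact Nat.mul_le_mul_right _ (card_Irr_le _)
  have h2 : (((Mon F e).filter (fun h => ¬ Squarefree (MM F * h + 1))).card : ℝ) ≤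
      ∑ j ∈ (Finset.range (e+κ+1)).filter (fun j => 2*(j+3) ≤ e+κ),
        ((q:ℝ)^e * ((q:ℝ)^(j+3))⁻¹ + (q:ℝ) ^ ((e + κ)/2)) := by
    refine (Nat.cast_le.2 h1).trans ?_
    push_cast
    apply Finset.sum_le_sum
    intro j hj
    rw [Finset.mem_filter] at hj
    have hq1 : (1:ℝ) ≤ q := by exact_mod_cast (by omega : 1 ≤ q)
    by_cases hc : 2*(j+3) ≤ e
    · have : (q:ℝ)^(j+3) * (q:ℝ) ^ (e - 2*(j+3)) = (q:ℝ)^e * ((q:ℝ)^(j+3))⁻¹ := by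
        rw [eq_mul_inv_iff_mul_eq₀ (by positivity), ← pow_add, ← pow_add]
        congr 1; omega
      rw [this]
      have : (0:ℝ) ≤ (q:ℝ) ^ ((e + κ)/2) := by positivity
      linarith
    · rw [← pow_add]
      have h5 : (q:ℝ)^(j+3+(e-2*(j+3))) ≤ (q:ℝ) ^ ((e + κ)/2) :=
        pow_le_pow_right₀ hq1 (by omega)
      have : (0:ℝ) ≤ (q:ℝ)^e * ((q:ℝ)^(j+3))⁻¹ := by positivity
      linarith
  refine h2.trans ((Finset.sum_le_sum_of_subset_of_nonneg (Finset.filter_subset _ _)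
    (fun j _ _ => by positivity)).trans ?_)
  rw [Finset.sum_add_distrib, ← Finset.mul_sum, Finset.sum_const, Finset.card_range, nsmul_eq_mul]
  have h6 := geo (q := (q:ℝ)) (by exact_mod_cast hq) (e+κ+1)
  have : (q:ℝ)^e * ∑ j ∈ Finset.range (e+κ+1), ((q:ℝ)^(j+3))⁻¹ ≤ (q:ℝ)^e * (1/18) := by gcongr
  linarith

lemma pairbad (hq : 3 ≤ Fintype.card F) {e e' : ℕ} (he : 1 ≤ e) (he' : 1 ≤ e') :
    (((Mon F e ×ˢ Mon F e').filter
        (fun x => ¬ IsCoprime (MM F * x.1 + 1) (MM F * x.2 + 1))).card : ℝ) ≤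
      (Fintype.card F : ℝ)^(e+e') / 18 + (min e e' + (MM F).natDegree + 1 : ℕ) *
        (Fintype.card F : ℝ) ^ (max e e' + (MM F).natDegree) := by
  set κ := (MM F).natDegree with hκ
  set q := Fintype.card F with hqd
  have hsub : (Mon F e ×ˢ Mon F e').filter
        (fun x => ¬ IsCoprime (MM F * x.1 + 1) (MM F * x.2 + 1)) ⊆
      ((Finset.range (min e e'+κ+1)).filter (fun j => j+3 ≤ min e e'+κ)).biUnion (fun j =>
        (Irr F (j+3)).biUnion (fun Q => (Mon F e).filter (fun h => Q ∣ MM F * h + 1) ×ˢ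
          (Mon F e').filter (fun h => Q ∣ MM F * h + 1))) := by
    intro x hh
    rw [Finset.mem_filter, Finset.mem_product] at hh
    obtain ⟨⟨hh, hh'⟩, hs⟩ := hh
    have hM := mem_Mon.1 (MM_natDegree hh he)
    have hM' := mem_Mon.1 (MM_natDegree hh' he')
    have : ∃ Q : F[X], Irreducible Q ∧ Q ∣ MM F * x.1 + 1 ∧ Q ∣ MM F * x.2 + 1 := by
      by_contra hcon
      push Not at hcon
      exact hs (isCoprime_of_irreducible_dvd (fun h => hM.1.ne_zero h.1) hcon)
    obtain ⟨Q, hQ, hd, hd'⟩ := this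
    obtain ⟨Q', hm', hi', ha'⟩ := exists_monic_irr hQ
    have h2 := ha'.dvd.trans hd
    have h2' := ha'.dvd.trans hd'
    have h3 := MM_deg hm' hi' h2
    have h4 := natDegree_le_of_dvd h2 hM.1.ne_zero
    have h4' := natDegree_le_of_dvd h2' hM'.1.ne_zero
    rw [hM.2, ← hκ] at h4
    rw [hM'.2, ← hκ] at h4'
    simp only [Finset.mem_biUnion, Finset.mem_filter, Finset.mem_range, mem_Irr, Finset.mem_product]
    exact ⟨Q'.natDegree - 3, ⟨by omega, by omega⟩, Q', ⟨⟨hm', by omega⟩, hi'⟩, ⟨hh, h2⟩, hh', h2'⟩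
  have h1 : ((Mon F e ×ˢ Mon F e').filter
        (fun x => ¬ IsCoprime (MM F * x.1 + 1) (MM F * x.2 + 1))).card ≤
      ∑ j ∈ (Finset.range (min e e'+κ+1)).filter (fun j => j+3 ≤ min e e'+κ),
        q^(j+3) * (q ^ (e - (j+3)) * q ^ (e' - (j+3))) := by
    refine (Finset.card_le_card hsub).trans (Finset.card_biUnion_le.trans (Finset.sum_le_sum ?_))
    intro j _
    refine Finset.card_biUnion_le.trans ((Finset.sum_le_card_nsmul _ _
      (q ^ (e - (j+3)) * q ^ (e' - (j+3))) ?_).trans ?_)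
    · intro Q hQ
      rw [mem_Irr] at hQ
      have a1 := MM_count hQ.1.1 e
      have a2 := MM_count hQ.1.1 e'
      rw [hQ.1.2] at a1 a2
      rw [Finset.card_product]
      exact Nat.mul_le_mul a1 a2
    · rw [smul_eq_mul]
      exact Nat.mul_le_mul_right _ (card_Irr_le _)
  have h2 : (((Mon F e ×ˢ Mon F e').filter
        (fun x => ¬ IsCoprime (MM F * x.1 + 1) (MM F * x.2 + 1))).card : ℝ) ≤
      ∑ j ∈ (Finset.range (min e e'+κ+1)).filter (fun j => j+3 ≤ min e e'+κ),
        ((q:ℝ)^(e+e') * ((q:ℝ)^(j+3))⁻¹ + (q:ℝ) ^ (max e e' + κ)) := by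
    refine (Nat.cast_le.2 h1).trans ?_
    push_cast
    apply Finset.sum_le_sum
    intro j hj
    rw [Finset.mem_filter] at hj
    have hq1 : (1:ℝ) ≤ q := by exact_mod_cast (by omega : 1 ≤ q)
    by_cases hc : j+3 ≤ min e e'
    · have : (q:ℝ)^(j+3) * ((q:ℝ) ^ (e - (j+3)) * (q:ℝ) ^ (e' - (j+3))) =
          (q:ℝ)^(e+e') * ((q:ℝ)^(j+3))⁻¹ := by
        rw [eq_mul_inv_iff_mul_eq₀ (by positivity), ← pow_add, ← pow_add, ← pow_add]
        congr 1; omega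
      rw [this]
      have : (0:ℝ) ≤ (q:ℝ) ^ (max e e' + κ) := by positivity
      linarith
    · rw [← pow_add, ← pow_add]
      have h5 : (q:ℝ)^(j+3+(e-(j+3) + (e' - (j+3)))) ≤ (q:ℝ) ^ (max e e' + κ) :=
        pow_le_pow_right₀ hq1 (by omega)
      have : (0:ℝ) ≤ (q:ℝ)^(e+e') * ((q:ℝ)^(j+3))⁻¹ := by positivity
      linarith
  refine h2.trans ((Finset.sum_le_sum_of_subset_of_nonneg (Finset.filter_subset _ _)
    (fun j _ _ => by positivity)).trans ?_)
  rw [Finset.sum_add_distrib, ← Finset.mul_sum, Finset.sum_const, Finset.card_range, nsmul_eq_mul]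
  have h6 := geo (q := (q:ℝ)) (by exact_mod_cast hq) (min e e'+κ+1)
  have : (q:ℝ)^(e+e') * ∑ j ∈ Finset.range (min e e'+κ+1), ((q:ℝ)^(j+3))⁻¹ ≤
    (q:ℝ)^(e+e') * (1/18) := by gcongr
  linarith

lemma threshold {q : ℕ} (hq : 3 ≤ q) (κ : ℕ) : ∃ E : ℕ, 1 ≤ E ∧ ∀ e, E ≤ e → κ ≤ e ∧
    36 * (e + κ + 1) * q ^ ((e + κ)/2) ≤ q ^ e := by
  refine ⟨κ + 4 * (400 + 72 * κ) + 4, by omega, fun e he => ⟨by omega, ?_⟩⟩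
  obtain ⟨u, hu⟩ : ∃ u, u = (e - κ) / 4 := ⟨_, rfl⟩
  have h1 : e ≤ κ + 4 * u + 3 := by omega
  have h2 : 400 + 72 * κ ≤ u := by omega
  have h3 : u < 2 ^ u := Nat.lt_two_pow_self
  have h4 : u * u ≤ q ^ (e - (e+κ)/2) := by
    calc u * u ≤ 2^u * 2^u := Nat.mul_le_mul h3.le h3.le
      _ = 2 ^ (2*u) := by rw [← pow_add]; congr 1; omega
      _ ≤ q ^ (2*u) := Nat.pow_le_pow_left (by omega) _
      _ ≤ _ := Nat.pow_le_pow_right (by omega) (by omega)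
  have h5 : 36 * (e + κ + 1) ≤ u * u := by nlinarith
  calc 36 * (e + κ + 1) * q ^ ((e + κ)/2) ≤ q ^ (e - (e+κ)/2) * q ^ ((e + κ)/2) :=
        Nat.mul_le_mul_right _ (h5.trans h4)
    _ = q ^ e := by rw [← pow_add]; congr 1; omega

theorem Tri_lower (hq : 3 ≤ Fintype.card F) : ∃ E C : ℕ, 0 < C ∧ ∀ d1 d2 d3 : ℕ, E ≤ d1 → E ≤ d2 →
    E ≤ d3 → Fintype.card F ^ (d1 + d2 + d3) ≤ C * (Tri F d1 d2 d3).card := by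
  obtain ⟨E, hE1, hE⟩ := threshold hq (MM F).natDegree
  set κ := (MM F).natDegree with hκ
  set q := Fintype.card F with hqd
  have hq1 : (1:ℝ) ≤ q := by exact_mod_cast (by omega : 1 ≤ q)
  refine ⟨E + κ, 2 * q ^ (3*κ), by positivity, ?_⟩
  have main : ∀ e1 e2 e3 : ℕ, E ≤ e1 → E ≤ e2 → E ≤ e3 →
      q ^ (e1 + e2 + e3) ≤ 2 * (Tri F (e1+κ) (e2+κ) (e3+κ)).card := by
    intro e1 e2 e3 h1 h2 h3
    have sq36 : ∀ e, E ≤ e →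
        (((Mon F e).filter (fun h => ¬ Squarefree (MM F * h + 1))).card : ℝ) ≤ (q:ℝ)^e / 12 := by
      intro e he
      have a1 := sqbad (F := F) hq (hE1.trans he)
      have a2 : (36 * (e + κ + 1 : ℕ) * (q:ℝ) ^ ((e + κ)/2)) ≤ (q:ℝ)^e := by exact_mod_cast (hE e he).2
      rw [← hκ, ← hqd] at a1
      linarith
    have pr36 : ∀ e e', E ≤ e → E ≤ e' → (((Mon F e ×ˢ Mon F e').filter
        (fun x => ¬ IsCoprime (MM F * x.1 + 1) (MM F * x.2 + 1))).card : ℝ) ≤ (q:ℝ)^(e+e')/12 := by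
      intro e e' he he'
      have a1 := pairbad (F := F) hq (hE1.trans he) (hE1.trans he')
      have hmin : E ≤ min e e' := le_min he he'
      have a2 : (36 * (min e e' + κ + 1 : ℕ) * (q:ℝ) ^ ((min e e' + κ)/2)) ≤ (q:ℝ)^(min e e') := by
        exact_mod_cast (hE _ hmin).2
      have a3 := (hE _ hmin).1
      have a4 : (q:ℝ)^κ ≤ (q:ℝ) ^ ((min e e' + κ)/2) := pow_le_pow_right₀ hq1 (by omega)
      rw [← hκ, ← hqd] at a1
      have a5 : (36 * (min e e' + κ + 1 : ℕ) * (q:ℝ) ^ κ) ≤ (q:ℝ)^(min e e') :=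
        (mul_le_mul_of_nonneg_left a4 (by positivity)).trans a2
      have a6 : (36 * (min e e' + κ + 1 : ℕ) * (q:ℝ) ^ κ) * (q:ℝ)^(max e e') ≤
          (q:ℝ)^(min e e') * (q:ℝ)^(max e e') := mul_le_mul_of_nonneg_right a5 (by positivity)
      rw [← pow_add, min_add_max] at a6
      rw [pow_add _ (max e e')] at a1
      linarith
    let All := Mon F e1 ×ˢ Mon F e2 ×ˢ Mon F e3
    let f : F[X] → F[X] := fun h => MM F * h + 1
    let G := All.filter (fun t => f t.1 ∈ Mon F (e1+κ) ∧ (f t.1, f t.2.1, f t.2.2) ∈ Tri F (e1+κ) (e2+κ) (e3+κ))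
    let B1 := (Mon F e1).filter (fun h => ¬ Squarefree (f h)) ×ˢ Mon F e2 ×ˢ Mon F e3
    let B2 := Mon F e1 ×ˢ (Mon F e2).filter (fun h => ¬ Squarefree (f h)) ×ˢ Mon F e3
    let B3 := Mon F e1 ×ˢ Mon F e2 ×ˢ (Mon F e3).filter (fun h => ¬ Squarefree (f h))
    let B4 := (((Mon F e1 ×ˢ Mon F e2).filter (fun x => ¬ IsCoprime (f x.1) (f x.2))) ×ˢ
      Mon F e3).image (fun y => (y.1.1, y.1.2, y.2))
    let B5 := (((Mon F e1 ×ˢ Mon F e3).filter (fun x => ¬ IsCoprime (f x.1) (f x.2))) ×ˢ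
      Mon F e2).image (fun y => (y.1.1, y.2, y.1.2))
    let B6 := Mon F e1 ×ˢ ((Mon F e2 ×ˢ Mon F e3).filter (fun x => ¬ IsCoprime (f x.1) (f x.2)))
    have hcov : All ⊆ G ∪ (B1 ∪ (B2 ∪ (B3 ∪ (B4 ∪ (B5 ∪ B6))))) := by
      rintro ⟨x, y, z⟩ ht
      simp only [All, Finset.mem_product] at ht
      obtain ⟨hx, hy, hz⟩ := ht
      have kx := MM_natDegree hx (hE1.trans h1)
      have ky := MM_natDegree hy (hE1.trans h2)
      have kz := MM_natDegree hz (hE1.trans h3)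
      have kx' := mem_Mon.1 kx
      have ky' := mem_Mon.1 ky
      have kz' := mem_Mon.1 kz
      simp only [G, B1, B2, B3, B4, B5, B6, All, Finset.mem_union, Finset.mem_filter,
        Finset.mem_product, Finset.mem_image, mem_Tri, Prod.exists, Prod.mk.injEq]
      by_cases c1 : Squarefree (f x)
      swap
      · right; left; exact ⟨⟨hx, c1⟩, hy, hz⟩
      by_cases c2 : Squarefree (f y)
      swap
      · right; right; left; exact ⟨hx, ⟨hy, c2⟩, hz⟩
      by_cases c3 : Squarefree (f z)
      swap
      · right; right; right; left; exact ⟨hx, hy, hz, c3⟩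
      by_cases c4 : IsCoprime (f x) (f y)
      swap
      · right; right; right; right; left
        exact ⟨x, y, z, ⟨⟨⟨hx, hy⟩, c4⟩, hz⟩, rfl, rfl, rfl⟩
      by_cases c5 : IsCoprime (f x) (f z)
      swap
      · right; right; right; right; right; left
        exact ⟨x, z, y, ⟨⟨⟨hx, hz⟩, c5⟩, hy⟩, rfl, rfl, rfl⟩
      by_cases c6 : IsCoprime (f y) (f z)
      swap
      · right; right; right; right; right; right
        exact ⟨hx, ⟨hy, hz⟩, c6⟩
      left
      exact ⟨⟨hx, hy, hz⟩, kx, ⟨kx', ky', kz'⟩, c1, c2, c3, c4, c5, c6⟩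
    have hG : G.card ≤ (Tri F (e1+κ) (e2+κ) (e3+κ)).card := by
      apply Finset.card_le_card_of_injOn (fun t => (f t.1, f t.2.1, f t.2.2))
      · intro t ht
        exact (Finset.mem_filter.1 ht).2.2
      · rintro ⟨x, y, z⟩ _ ⟨x', y', z'⟩ _ h
        have finj : ∀ a b, f a = f b → a = b := fun a b hab =>
          mul_left_cancel₀ MM_monic.ne_zero (add_right_cancel hab)
        simp only [Prod.mk.injEq] at h ⊢
        exact ⟨finj _ _ h.1, finj _ _ h.2.1, finj _ _ h.2.2⟩
    have hcard : All.card ≤ G.card + (B1.card + (B2.card + (B3.card + (B4.card + (B5.card + B6.card))))) := by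
      refine (Finset.card_le_card hcov).trans ?_
      have u1 := Finset.card_union_le G (B1 ∪ (B2 ∪ (B3 ∪ (B4 ∪ (B5 ∪ B6)))))
      have u2 := Finset.card_union_le B1 (B2 ∪ (B3 ∪ (B4 ∪ (B5 ∪ B6))))
      have u3 := Finset.card_union_le B2 (B3 ∪ (B4 ∪ (B5 ∪ B6)))
      have u4 := Finset.card_union_le B3 (B4 ∪ (B5 ∪ B6))
      have u5 := Finset.card_union_le B4 (B5 ∪ B6)
      have u6 := Finset.card_union_le B5 B6
      omega
    have hAll : (All.card : ℝ) = (q:ℝ)^(e1+e2+e3) := by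
      simp only [All, Finset.card_product, card_Mon]; push_cast; rw [← hqd]; ring
    have hB1 : (B1.card : ℝ) ≤ (q:ℝ)^(e1+e2+e3)/12 := by
      simp only [B1, Finset.card_product, card_Mon]; push_cast; rw [← hqd]
      calc _ ≤ (q:ℝ)^e1/12 * ((q:ℝ)^e2 * (q:ℝ)^e3) :=
            mul_le_mul_of_nonneg_right (sq36 e1 h1) (by positivity)
        _ = _ := by ring
    have hB2 : (B2.card : ℝ) ≤ (q:ℝ)^(e1+e2+e3)/12 := by
      simp only [B2, Finset.card_product, card_Mon]; push_cast; rw [← hqd]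
      calc _ ≤ (q:ℝ)^e1 * ((q:ℝ)^e2/12 * (q:ℝ)^e3) := by
            have := sq36 e2 h2
            gcongr
        _ = _ := by ring
    have hB3 : (B3.card : ℝ) ≤ (q:ℝ)^(e1+e2+e3)/12 := by
      simp only [B3, Finset.card_product, card_Mon]; push_cast; rw [← hqd]
      calc _ ≤ (q:ℝ)^e1 * ((q:ℝ)^e2 * ((q:ℝ)^e3/12)) := by
            have := sq36 e3 h3
            gcongr
        _ = _ := by ring
    have hB4 : (B4.card : ℝ) ≤ (q:ℝ)^(e1+e2+e3)/12 := by
      have : (B4.card : ℝ) ≤ _ := Nat.cast_le.2 Finset.card_image_le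
      refine this.trans ?_
      rw [Finset.card_product, card_Mon]; push_cast; rw [← hqd]
      calc _ ≤ (q:ℝ)^(e1+e2)/12 * (q:ℝ)^e3 :=
            mul_le_mul_of_nonneg_right (pr36 e1 e2 h1 h2) (by positivity)
        _ = _ := by ring
    have hB5 : (B5.card : ℝ) ≤ (q:ℝ)^(e1+e2+e3)/12 := by
      have : (B5.card : ℝ) ≤ _ := Nat.cast_le.2 Finset.card_image_le
      refine this.trans ?_
      rw [Finset.card_product, card_Mon]; push_cast; rw [← hqd]
      calc _ ≤ (q:ℝ)^(e1+e3)/12 * (q:ℝ)^e2 :=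
            mul_le_mul_of_nonneg_right (pr36 e1 e3 h1 h3) (by positivity)
        _ = _ := by ring
    have hB6 : (B6.card : ℝ) ≤ (q:ℝ)^(e1+e2+e3)/12 := by
      simp only [B6]
      rw [Finset.card_product, card_Mon]; push_cast; rw [← hqd]
      calc _ ≤ (q:ℝ)^e1 * ((q:ℝ)^(e2+e3)/12) :=
            mul_le_mul_of_nonneg_left (pr36 e2 e3 h2 h3) (by positivity)
        _ = _ := by ring
    have hcard' : (All.card : ℝ) ≤ G.card + (B1.card + (B2.card + (B3.card + (B4.card + (B5.card + B6.card))))) := by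
      exact_mod_cast hcard
    have hG' : (G.card : ℝ) ≤ (Tri F (e1+κ) (e2+κ) (e3+κ)).card := by exact_mod_cast hG
    have : (q:ℝ)^(e1+e2+e3) ≤ 2 * (Tri F (e1+κ) (e2+κ) (e3+κ)).card := by linarith
    exact_mod_cast this
  intro d1 d2 d3 h1 h2 h3
  have := main (d1-κ) (d2-κ) (d3-κ) (by omega) (by omega) (by omega)
  rw [Nat.sub_add_cancel (by omega), Nat.sub_add_cancel (by omega), Nat.sub_add_cancel (by omega)] at this
  calc q ^ (d1+d2+d3) = q ^ (3*κ) * q ^ (d1 - κ + (d2 - κ) + (d3-κ)) := by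
        rw [← pow_add]; congr 1; omega
    _ ≤ q ^ (3*κ) * (2 * (Tri F d1 d2 d3).card) := Nat.mul_le_mul_left _ this
    _ = _ := by ring

end Stp

open Polynomial Classical

namespace Stp

variable {F : Type} [Field F] [Fintype F]

/-- admissible degree triples -/
noncomputable def II (g : ℕ) : Finset (ℕ × ℕ × ℕ) :=
  (Finset.range (g+4) ×ˢ Finset.range (g+4) ×ˢ Finset.range (g+4)).filter fun d =>
    Lg d.1 d.2.1 d.2.2 = g + 3 ∧
       ({d.1, d.2.1, d.2.2} : Multiset ℕ) ≠ {g + 3, 0, 0} ∧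
       ({d.1, d.2.1, d.2.2} : Multiset ℕ) ≠ {g + 2, 0, 0}

lemma Lg_cases (a b c : ℕ) : Lg a b c = a + b + c ∨ Lg a b c = a + b + c + 1 := by
  unfold Lg; split_ifs <;> simp

lemma mem_II {g : ℕ} {d : ℕ × ℕ × ℕ} : d ∈ II g ↔ Lg d.1 d.2.1 d.2.2 = g + 3 ∧
       ({d.1, d.2.1, d.2.2} : Multiset ℕ) ≠ {g + 3, 0, 0} ∧
       ({d.1, d.2.1, d.2.2} : Multiset ℕ) ≠ {g + 2, 0, 0} := by
  simp only [II, Finset.mem_filter, Finset.mem_product, Finset.mem_range, and_iff_right_iff_imp]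
  rintro ⟨h, -⟩
  rcases Lg_cases d.1 d.2.1 d.2.2 with h1 | h1 <;> omega

lemma II_sum {g : ℕ} {d : ℕ × ℕ × ℕ} (h : d ∈ II g) :
    d.1 + d.2.1 + d.2.2 = g + 3 ∨ d.1 + d.2.1 + d.2.2 = g + 2 := by
  have := (mem_II.1 h).1
  rcases Lg_cases d.1 d.2.1 d.2.2 with h1 | h1 <;> omega

lemma II_ne {g : ℕ} {d : ℕ × ℕ × ℕ} (h : d ∈ II g) : 1 ≤ d.1 + d.2.1 := by
  by_contra hc
  have h1 := II_sum h
  obtain ⟨-, h2, h3⟩ := mem_II.1 h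
  obtain ⟨a, b, c⟩ := d
  simp only at *
  obtain rfl : a = 0 := by omega
  obtain rfl : b = 0 := by omega
  have hp : ({0, 0, c} : Multiset ℕ) = {c, 0, 0} := by
    show (0 ::ₘ 0 ::ₘ c ::ₘ 0 : Multiset ℕ) = c ::ₘ 0 ::ₘ 0 ::ₘ 0
    rw [Multiset.cons_swap 0 c, Multiset.cons_swap 0 c]
  rcases h1 with h1 | h1
  · apply h2; rw [hp]; congr 1; omega
  · apply h3; rw [hp]; congr 1; omega

/-- the family as a finset -/
noncomputable def FF (F : Type) [Field F] [Fintype F] (g : ℕ) : Finset (F[X] × F[X] × F[X]) :=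
  (II g).biUnion fun d => Tri F d.1 d.2.1 d.2.2

lemma coe_FF (g : ℕ) : FSet F g = ↑(FF F g) := by
  ext t
  simp only [FSet, FhatSet, FF, Finset.mem_coe, Finset.mem_biUnion, mem_Tri, mem_II,
    Set.mem_setOf_eq]
  constructor
  · rintro ⟨⟨a1, a2, a3, a4, a5, a6, a7, a8, a9, a10⟩, b1, b2⟩
    exact ⟨(t.1.natDegree, t.2.1.natDegree, t.2.2.natDegree), ⟨a8, a9, a10⟩,
      ⟨⟨b1, rfl⟩, ⟨b2, rfl⟩, a7, rfl⟩, a1, a2, a3, a4, a5, a6⟩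
  · rintro ⟨⟨d1, d2, d3⟩, ⟨a8, a9, a10⟩, ⟨⟨b1, c1⟩, ⟨b2, c2⟩, a7, c3⟩, a1, a2, a3, a4, a5, a6⟩
    simp only at *
    subst c1 c2 c3
    exact ⟨⟨a1, a2, a3, a4, a5, a6, a7, a8, a9, a10⟩, b1, b2⟩

lemma FF_disj (s : Set (ℕ × ℕ × ℕ)) :
    s.PairwiseDisjoint (fun d : ℕ × ℕ × ℕ => Tri F d.1 d.2.1 d.2.2) := by
  intro d _ d' _ hne
  rw [Function.onFun, Finset.disjoint_left]
  intro t h h'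
  rw [mem_Tri] at h h'
  apply hne
  ext
  · exact h.1.1.2.symm.trans h'.1.1.2
  · exact h.1.2.1.2.symm.trans h'.1.2.1.2
  · exact h.1.2.2.2.symm.trans h'.1.2.2.2

theorem FF_lower (hq : 3 ≤ Fintype.card F) : ∃ C G0 : ℕ, 0 < C ∧ ∀ g, G0 ≤ g →
    g ^ 2 * Fintype.card F ^ g ≤ C * (FF F g).card := by
  obtain ⟨E, C, hC, hE⟩ := Tri_lower (F := F) hq
  set q := Fintype.card F
  refine ⟨1024 * C, 16 * (E + 1), by omega, fun g hg => ?_⟩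
  obtain ⟨m, hm⟩ : ∃ m, m = g / 16 := ⟨_, rfl⟩
  have hm1 : g < 16 * m + 16 := by omega
  have hm2 : 16 * m ≤ g := by omega
  have hm3 : E + 1 ≤ m := by omega
  let φ : ℕ × ℕ → ℕ × ℕ × ℕ := fun x => (2 * (m + x.1) + 1, 2 * (m + x.2),
    g + 2 - (2 * (m + x.1) + 1) - 2 * (m + x.2))
  let J := (Finset.range m ×ˢ Finset.range m).image φ
  have hJ : J ⊆ II g := by
    intro d hd
    simp only [J, Finset.mem_image, Finset.mem_product, Finset.mem_range] at hd
    obtain ⟨x, ⟨hx, hx'⟩, rfl⟩ := hd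
    rw [mem_II]
    simp only [φ]
    have hne : ∀ N, ({2 * (m + x.1) + 1, 2 * (m + x.2),
        g + 2 - (2 * (m + x.1) + 1) - 2 * (m + x.2)} : Multiset ℕ) ≠ {N, 0, 0} := by
      intro N h
      have : (0:ℕ) ∈ ({N, 0, 0} : Multiset ℕ) := by simp
      rw [← h] at this
      simp only [Multiset.insert_eq_cons, Multiset.mem_cons, Multiset.mem_singleton] at this
      omega
    refine ⟨?_, hne _, hne _⟩
    unfold Lg
    rw [if_neg]
    · omega
    · rw [Nat.even_iff, Nat.even_iff]; omega
  have hcard : (FF F g).card = ∑ d ∈ II g, (Tri F d.1 d.2.1 d.2.2).card :=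
    Finset.card_biUnion (fun d hd d' hd' hne => FF_disj (F := F) (II g : Set _) hd hd' hne)
  have h1 : ∑ d ∈ J, (Tri F d.1 d.2.1 d.2.2).card ≤ (FF F g).card := by
    rw [hcard]; exact Finset.sum_le_sum_of_subset hJ
  have h2 : m ^ 2 * q ^ (g+2) ≤ ∑ d ∈ J, C * (Tri F d.1 d.2.1 d.2.2).card := by
    rw [Finset.sum_image]
    · have : m ^ 2 * q ^ (g+2) = (Finset.range m ×ˢ Finset.range m).card • q ^ (g+2) := by
        rw [Finset.card_product, Finset.card_range, smul_eq_mul, sq]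
      rw [this]
      apply Finset.card_nsmul_le_sum
      intro x hx
      rw [Finset.mem_product, Finset.mem_range, Finset.mem_range] at hx
      have := hE (φ x).1 (φ x).2.1 (φ x).2.2 (by simp only [φ]; omega) (by simp only [φ]; omega)
        (by simp only [φ]; omega)
      have h3 : (φ x).1 + (φ x).2.1 + (φ x).2.2 = g + 2 := by simp only [φ]; omega
      rwa [h3] at this
    · rintro ⟨x, y⟩ _ ⟨x', y'⟩ _ h
      simp only [φ, Prod.mk.injEq] at h ⊢
      omega
  rw [← Finset.mul_sum] at h2
  have h4 : q ^ g ≤ q ^ (g+2) := Nat.pow_le_pow_right (by omega) (by omega)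
  have h5 : g ^ 2 ≤ 1024 * m ^ 2 := by
    have : g ≤ 32 * m := by omega
    calc g ^ 2 ≤ (32 * m)^2 := Nat.pow_le_pow_left this 2
      _ = _ := by ring
  calc g ^ 2 * q ^ g ≤ (1024 * m ^ 2) * q ^ (g+2) := Nat.mul_le_mul h5 h4
    _ = 1024 * (m ^ 2 * q ^ (g+2)) := by ring
    _ ≤ 1024 * (C * (FF F g).card) := Nat.mul_le_mul_left _ (h2.trans (Nat.mul_le_mul_left _ h1))
    _ = _ := by ring

lemma small_count (g K : ℕ) :
    ((II g).filter (fun d => d.1 < K ∧ d.2.1 < K)).card ≤ 2 * K ^ 2 := by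
  have : (Finset.range K ×ˢ Finset.range K ×ˢ Finset.range 2).card = 2 * K ^ 2 := by
    simp only [Finset.card_product, Finset.card_range]; ring
  rw [← this]
  apply Finset.card_le_card_of_injOn (fun d => (d.1, d.2.1, g + 3 - (d.1 + d.2.1 + d.2.2)))
  · intro d hd
    have hd := Finset.mem_filter.1 hd
    have := II_sum hd.1
    simp only [Finset.mem_coe, Finset.mem_product, Finset.mem_range]
    omega
  · rintro ⟨a, b, c⟩ hd ⟨a', b', c'⟩ hd' h
    have hd := Finset.mem_filter.1 hd
    have hd' := Finset.mem_filter.1 hd'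
    have h1 := II_sum hd.1
    have h2 := II_sum hd'.1
    simp only [Prod.mk.injEq] at h h1 h2 ⊢
    omega

lemma II_card (g : ℕ) : (II g).card ≤ (g+4)^3 := by
  refine (Finset.card_filter_le _ _).trans ?_
  simp only [Finset.card_product, Finset.card_range]
  apply le_of_eq; ring

/-- contribution of one degree triple -/
noncomputable def VV (F : Type) [Field F] [Fintype F] (n : ℕ) (d : ℕ × ℕ × ℕ) : ℤ :=
  ∑ P ∈ Irr F n, ∑ t ∈ Tri F d.1 d.2.1 d.2.2, chiP P (t.1 * t.2.1)

lemma VV_small (hodd : Fintype.card F % 2 = 1) {t g : ℕ} (ht : 0 < t) {d : ℕ × ℕ × ℕ}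
    (hd : d ∈ II g) {K : ℕ} (h1 : d.1 < K) (h2 : d.2.1 < K) :
    ((2*t : ℕ) : ℝ) * |(VV F (2*t) d : ℝ)| ≤
      19 * (2*K) * (Fintype.card F : ℝ)^t * (Fintype.card F : ℝ)^(g+3) := by
  set q := Fintype.card F with hq
  have hq1 : (1:ℝ) ≤ q := by exact_mod_cast Fintype.card_pos
  have e1 : ((2*t : ℕ) : ℝ) * |(VV F (2*t) d : ℝ)| =
      |∑ x ∈ Tri F d.1 d.2.1 d.2.2, ((2*t : ℕ) : ℝ) * ((∑ P ∈ Irr F (2*t), chiP P (x.1 * x.2.1) : ℤ):ℝ)| := by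
    rw [← Finset.mul_sum, abs_mul, abs_of_nonneg (by positivity : (0:ℝ) ≤ ((2*t:ℕ):ℝ))]
    congr 2
    rw [VV, Finset.sum_comm]; push_cast; rfl
  rw [e1]
  refine (Finset.abs_sum_le_sum_abs _ _).trans ?_
  have e2 : ∀ x ∈ Tri F d.1 d.2.1 d.2.2,
      |((2*t : ℕ) : ℝ) * ((∑ P ∈ Irr F (2*t), chiP P (x.1 * x.2.1) : ℤ):ℝ)| ≤
        19 * (2*K) * (q:ℝ)^t := by
    intro x hx
    rw [mem_Tri] at hx
    obtain ⟨⟨⟨m1, n1⟩, ⟨m2, n2⟩, -⟩, s1, s2, -, c, -⟩ := hx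
    have hdeg : (x.1 * x.2.1).natDegree = d.1 + d.2.1 := by rw [m1.natDegree_mul m2, n1, n2]
    have hsf : Squarefree (x.1 * x.2.1) :=
      (squarefree_mul_iff).2 ⟨c.isRelPrime, s1, s2⟩
    have := prime_sum_bound hodd ht hsf (by rw [hdeg]; exact II_ne hd)
    refine this.trans ?_
    rw [hdeg]
    have : ((d.1 + d.2.1 : ℕ):ℝ) ≤ 2 * K := by exact_mod_cast (by omega)
    gcongr
  refine (Finset.sum_le_card_nsmul _ _ _ e2).trans ?_
  rw [nsmul_eq_mul, mul_comm]
  have e3 : ((Tri F d.1 d.2.1 d.2.2).card : ℝ) ≤ (q:ℝ)^(g+3) := by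
    have h3 := Tri_card_le (F := F) d.1 d.2.1 d.2.2
    have h4 : q ^ (d.1 + d.2.1 + d.2.2) ≤ q ^ (g+3) :=
      Nat.pow_le_pow_right Fintype.card_pos (by have := II_sum hd; omega)
    exact_mod_cast h3.trans h4
  gcongr

lemma VV_swap (n a b c : ℕ) : VV F n (a, b, c) = VV F n (b, a, c) := by
  unfold VV
  apply Finset.sum_congr rfl
  intro P _
  exact Tri_swap P a b c

lemma VV_large1 (hodd : Fintype.card F % 2 = 1) {n g : ℕ} {a b c : ℕ}
    (hs : a + b + c ≤ g + 3) (h1 : 9 * n ≤ a) :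
    |(VV F n (a,b,c) : ℝ)| * (Fintype.card F:ℝ)^(4*n) ≤
      (Fintype.card F : ℝ)^n * (g+4:ℕ)^3 * (Fintype.card F : ℝ)^(g+3) := by
  set q := Fintype.card F with hq
  have hq1 : 1 ≤ q := Fintype.card_pos
  have e1 : |VV F n (a,b,c)| ≤ (q:ℤ)^n * (((g+4:ℕ):ℤ)^3 * (q:ℤ)^(g+3-4*n)) := by
    refine (Finset.abs_sum_le_sum_abs _ _).trans ?_
    refine (Finset.sum_le_card_nsmul _ _ (((g+4:ℕ):ℤ)^3 * (q:ℤ)^(g+3-4*n)) ?_).trans ?_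
    · intro P hP
      rw [mem_Irr] at hP
      refine (large_bound hodd hP.1.1 hP.2 a b c).trans ?_
      rw [hP.1.2]
      have k1 : ((a + 1 : ℕ) * (b + 1 : ℕ) * (c + 1 : ℕ) : ℤ) ≤ ((g+4:ℕ):ℤ)^3 := by
        have : (a+1)*(b+1)*(c+1) ≤ (g+4)*(g+4)*(g+4) :=
          Nat.mul_le_mul (Nat.mul_le_mul (by omega) (by omega)) (by omega)
        have h3 : (g+4)*(g+4)*(g+4) = (g+4)^3 := by ring
        rw [h3] at this
        exact_mod_cast this
      have k2 : (q:ℤ)^(b + c + (a - (a-n)/2)) ≤ (q:ℤ)^(g+3-4*n) :=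
        pow_le_pow_right₀ (by exact_mod_cast hq1) (by omega)
      exact mul_le_mul k1 k2 (by positivity) (by positivity)
    · rw [nsmul_eq_mul]
      have : ((Irr F n).card : ℤ) ≤ (q:ℤ)^n := by exact_mod_cast card_Irr_le n
      exact mul_le_mul_of_nonneg_right this (by positivity)
  have e2 : |(VV F n (a,b,c) : ℝ)| ≤ (q:ℝ)^n * (((g+4:ℕ):ℝ)^3 * (q:ℝ)^(g+3-4*n)) := by
    exact_mod_cast e1
  calc _ ≤ (q:ℝ)^n * (((g+4:ℕ):ℝ)^3 * (q:ℝ)^(g+3-4*n)) * (q:ℝ)^(4*n) :=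
        mul_le_mul_of_nonneg_right e2 (by positivity)
    _ = (q:ℝ)^n * (g+4:ℕ)^3 * ((q:ℝ)^(g+3-4*n) * (q:ℝ)^(4*n)) := by ring
    _ = _ := by rw [← pow_add]; congr 2; omega

lemma VV_large (hodd : Fintype.card F % 2 = 1) {n g : ℕ} {d : ℕ × ℕ × ℕ}
    (hd : d ∈ II g) (h : ¬ (d.1 < 9 * n ∧ d.2.1 < 9 * n)) :
    |(VV F n d : ℝ)| * (Fintype.card F:ℝ)^(4*n) ≤
      (Fintype.card F : ℝ)^n * (g+4:ℕ)^3 * (Fintype.card F : ℝ)^(g+3) := by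
  have hs := II_sum hd
  obtain ⟨a, b, c⟩ := d
  simp only at h hs
  by_cases h1 : 9 * n ≤ a
  · exact VV_large1 hodd (by omega) h1
  · rw [VV_swap]; exact VV_large1 hodd (by omega) (by omega)

theorem total_bound (hodd : Fintype.card F % 2 = 1) {t g : ℕ} (ht : 0 < t) :
    ((2*t : ℕ) : ℝ) * |((∑ P ∈ Irr F (2*t), ∑ x ∈ FF F g, chiP P (x.1 * x.2.1) : ℤ) : ℝ)| ≤
      2 * (9*(2*t:ℕ))^2 * (19 * (2*(9*(2*t:ℕ))) * (Fintype.card F : ℝ)^t * (Fintype.card F : ℝ)^(g+3))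
      + (2*t:ℕ) * ((g+4:ℕ)^3 * ((Fintype.card F : ℝ)^(2*t) * (g+4:ℕ)^3 * (Fintype.card F : ℝ)^(g+3) /
        (Fintype.card F:ℝ)^(4*(2*t)))) := by
  set n := 2 * t with hn
  set q := Fintype.card F with hq
  have hq1 : 1 ≤ q := Fintype.card_pos
  have hqp : (0:ℝ) < q := by exact_mod_cast hq1
  have e1 : ∑ P ∈ Irr F n, ∑ x ∈ FF F g, chiP P (x.1 * x.2.1) = ∑ d ∈ II g, VV F n d := by
    unfold VV
    rw [Finset.sum_comm (s := II g)]
    apply Finset.sum_congr rfl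
    intro P _
    exact Finset.sum_biUnion (FF_disj _)
  rw [e1]
  have e2 : |((∑ d ∈ II g, VV F n d : ℤ):ℝ)| ≤ ∑ d ∈ II g, |(VV F n d:ℝ)| := by
    push_cast; exact Finset.abs_sum_le_sum_abs _ _
  rw [← Finset.sum_filter_add_sum_filter_not (II g) (fun d => d.1 < 9*n ∧ d.2.1 < 9*n)
    (fun d => |(VV F n d:ℝ)|)] at e2
  refine (mul_le_mul_of_nonneg_left e2 (by positivity)).trans ?_
  rw [mul_add]
  apply add_le_add
  · rw [Finset.mul_sum]
    refine (Finset.sum_le_card_nsmul _ _ (19 * (2*(9*n:ℕ)) * (q:ℝ)^t * (q:ℝ)^(g+3)) ?_).trans ?_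
    · intro d hd
      rw [Finset.mem_filter] at hd
      exact VV_small hodd ht hd.1 hd.2.1 hd.2.2
    · rw [nsmul_eq_mul]
      have : (((II g).filter (fun d => d.1 < 9*n ∧ d.2.1 < 9*n)).card : ℝ) ≤ 2 * (9*n)^2 := by
        exact_mod_cast small_count g (9*n)
      push_cast
      gcongr
  · apply mul_le_mul_of_nonneg_left _ (by positivity)
    refine (Finset.sum_le_card_nsmul _ _ ((q : ℝ)^n * (g+4:ℕ)^3 * (q : ℝ)^(g+3) / (q:ℝ)^(4*n)) ?_).trans ?_
    · intro d hd
      rw [Finset.mem_filter] at hd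
      rw [le_div_iff₀ (by positivity)]
      exact VV_large hodd hd.1 hd.2
    · rw [nsmul_eq_mul]
      have : (((II g).filter (fun d => ¬ (d.1 < 9*n ∧ d.2.1 < 9*n))).card : ℝ) ≤ ((g+4:ℕ):ℝ)^3 := by
        exact_mod_cast (Finset.card_filter_le _ _).trans (II_card g)
      gcongr

end Stp

open Polynomial Classical

namespace Stp

variable {F : Type} [Field F] [Fintype F]

lemma final_bound (hodd : Fintype.card F % 2 = 1) (hq3 : 3 ≤ Fintype.card F) {C t g : ℕ}
    (ht : 0 < t) (hg : 1 ≤ g)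
    (hC : g ^ 2 * Fintype.card F ^ g ≤ C * (FF F g).card)
    (hlow : (g:ℝ)^3 ≤ (Fintype.card F : ℝ)^(2*t)) :
    |((2*t:ℕ) : ℝ) * ((Fintype.card F : ℝ) ^ t)⁻¹ / ((FF F g).card : ℝ) *
      ((∑ P ∈ Irr F (2*t), ∑ x ∈ FF F g, chiP P (x.1 * x.2.1) : ℤ) : ℝ)| ≤
      55404 * C * (Fintype.card F : ℝ)^3 * ((2*t:ℕ)^3 / (g:ℝ)^2) +
        15625 * C * (Fintype.card F : ℝ)^3 * (g:ℝ)⁻¹ := by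
  have hT := total_bound (F := F) (g := g) hodd ht
  set S : ℝ := ((∑ P ∈ Irr F (2*t), ∑ x ∈ FF F g, chiP P (x.1 * x.2.1) : ℤ) : ℝ)
  set n : ℕ := 2 * t with hn
  set q : ℕ := Fintype.card F
  have hq : (3:ℝ) ≤ q := by exact_mod_cast hq3
  have hq0 : (0:ℝ) < q := by linarith
  have hg' : (1:ℝ) ≤ g := by exact_mod_cast hg
  have hg0 : (0:ℝ) < g := by linarith
  have hC' : (g:ℝ)^2 * (q:ℝ)^g ≤ C * (FF F g).card := by exact_mod_cast hC
  have hX : (0:ℝ) < (FF F g).card := by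
    rcases Nat.eq_zero_or_pos (FF F g).card with h | h
    · rw [h] at hC'
      have : (0:ℝ) < (g:ℝ)^2 * (q:ℝ)^g := by positivity
      simp at hC'; linarith
    · exact_mod_cast h
  set X : ℝ := ((FF F g).card : ℝ)
  have habs : |(n : ℝ) * ((q : ℝ) ^ t)⁻¹ / X * S| = (n * |S|) * ((q:ℝ)^t)⁻¹ / X := by
    rw [abs_mul, abs_of_nonneg (by positivity)]; ring
  rw [habs, div_le_iff₀ hX]
  -- bound n ≤ q^t
  have hnq : (n:ℝ) ≤ (q:ℝ)^t := by
    have h1 : n ≤ 2 ^ t := by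
      have : t ≤ 2^(t-1) := by
        have := Nat.lt_two_pow_self (n := t-1)
        omega
      calc n = 2 * t := hn
        _ ≤ 2 * 2^(t-1) := by omega
        _ = 2^t := by rw [← pow_succ']; congr 1; omega
    have h2 : 2^t ≤ q^t := Nat.pow_le_pow_left (by omega) t
    exact_mod_cast h1.trans h2
  have hT1 : 2 * (9*(n:ℝ))^2 * (19 * (2*(9*(n:ℝ))) * (q : ℝ)^t * (q : ℝ)^(g+3)) * ((q:ℝ)^t)⁻¹ ≤
      55404 * C * (q:ℝ)^3 * ((n:ℝ)^3 / (g:ℝ)^2) * X := by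
    have e : 2 * (9*(n:ℝ))^2 * (19 * (2*(9*(n:ℝ))) * (q : ℝ)^t * (q : ℝ)^(g+3)) * ((q:ℝ)^t)⁻¹ =
        55404 * (q:ℝ)^3 * ((n:ℝ)^3 / (g:ℝ)^2) * ((g:ℝ)^2 * (q:ℝ)^g) := by
      rw [pow_add]; field_simp; ring
    rw [e]
    calc _ ≤ 55404 * (q:ℝ)^3 * ((n:ℝ)^3 / (g:ℝ)^2) * (C * X) :=
          mul_le_mul_of_nonneg_left hC' (by positivity)
      _ = _ := by ring
  have hT2 : (n:ℝ) * (((g+4:ℕ):ℝ)^3 * ((q : ℝ)^n * ((g+4:ℕ):ℝ)^3 * (q : ℝ)^(g+3) /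
        (q:ℝ)^(4*n))) * ((q:ℝ)^t)⁻¹ ≤ 15625 * C * (q:ℝ)^3 * (g:ℝ)⁻¹ * X := by
    have e1 : (n:ℝ) * (((g+4:ℕ):ℝ)^3 * ((q : ℝ)^n * ((g+4:ℕ):ℝ)^3 * (q : ℝ)^(g+3) /
        (q:ℝ)^(4*n))) * ((q:ℝ)^t)⁻¹ =
        ((n:ℝ) * ((q:ℝ)^t)⁻¹) * (((g+4:ℕ):ℝ)^6 * (q:ℝ)^3 * (q:ℝ)^g * (((q:ℝ)^n)^3)⁻¹) := by
      have : (q:ℝ)^(4*n) = (q:ℝ)^n * ((q:ℝ)^n)^3 := by rw [← pow_mul, ← pow_add]; congr 1; ring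
      rw [this, pow_add]; field_simp
    rw [e1]
    have k1 : (n:ℝ) * ((q:ℝ)^t)⁻¹ ≤ 1 := by
      rw [← div_eq_mul_inv, div_le_one (by positivity)]; exact hnq
    have k2 : ((g+4:ℕ):ℝ)^6 ≤ 15625 * (g:ℝ)^6 := by
      have : ((g+4:ℕ):ℝ) ≤ 5 * g := by push_cast; linarith
      calc _ ≤ (5 * (g:ℝ))^6 := by gcongr
        _ = _ := by ring
    have k3 : (((q:ℝ)^n)^3)⁻¹ ≤ ((g:ℝ)^9)⁻¹ := by
      have : (g:ℝ)^9 ≤ ((q:ℝ)^n)^3 := by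
        calc (g:ℝ)^9 = ((g:ℝ)^3)^3 := by ring
          _ ≤ _ := by gcongr
      gcongr
    have k4 : (g:ℝ)^6 * ((g:ℝ)^9)⁻¹ ≤ (g:ℝ)⁻¹ * (g:ℝ)^2 := by
      have e : (g:ℝ)^6 * ((g:ℝ)^9)⁻¹ = (g:ℝ)⁻¹ * (((g:ℝ)^2)⁻¹) := by field_simp
      rw [e]
      apply mul_le_mul_of_nonneg_left _ (by positivity)
      have h1 : (1:ℝ) ≤ (g:ℝ)^2 := one_le_pow₀ hg'
      exact (inv_le_one_of_one_le₀ h1).trans h1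
    calc _ ≤ 1 * (15625 * (g:ℝ)^6 * (q:ℝ)^3 * (q:ℝ)^g * ((g:ℝ)^9)⁻¹) := by gcongr
      _ = 15625 * (q:ℝ)^3 * (q:ℝ)^g * ((g:ℝ)^6 * ((g:ℝ)^9)⁻¹) := by ring
      _ ≤ 15625 * (q:ℝ)^3 * (q:ℝ)^g * ((g:ℝ)⁻¹ * (g:ℝ)^2) := by gcongr
      _ = 15625 * (q:ℝ)^3 * (g:ℝ)⁻¹ * ((g:ℝ)^2 * (q:ℝ)^g) := by ring
      _ ≤ 15625 * (q:ℝ)^3 * (g:ℝ)⁻¹ * (C * X) := mul_le_mul_of_nonneg_left hC' (by positivity)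
      _ = _ := by ring
  have hT' := mul_le_mul_of_nonneg_right hT (by positivity : (0:ℝ) ≤ ((q:ℝ)^t)⁻¹)
  rw [add_mul] at hT'
  rw [add_mul]
  linarith

end Stp



open Stp

/-- for a sequence of even `n(g)` with `3·log_q g ≤ n(g)` for large `g` and
`n(g) = o(g^{2/3})`, the normalized character double sum
`(n(g)·q^{-n(g)/2}/|F_g|)·Σ_{deg P = n(g)} Σ_{(f1,f2,f3) ∈ F_g} χ_P(f1·f2)` tends to `0`
as `g → ∞`. -/
theorem stmt13 (q : ℕ) (hq_odd : Odd q) (hq_pp : IsPrimePow q)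
    (Fq : Type) [Field Fq] [Fintype Fq] (hFq : Fintype.card Fq = q)
    (n : ℕ → ℕ) (hn_even : ∀ g, Even (n g)) (hn_pos : ∀ g, 0 < n g)
    (hn_low : ∃ g0 : ℕ, ∀ g : ℕ, g0 ≤ g → 3 * Real.log g / Real.log q ≤ (n g : ℝ))
    (hn_up : Filter.Tendsto (fun g : ℕ => (n g : ℝ) / (g : ℝ) ^ ((2 : ℝ) / 3))
      Filter.atTop (nhds 0)) :
    Filter.Tendsto (fun g : ℕ =>
        (n g : ℝ) * ((q : ℝ) ^ (n g / 2))⁻¹ / ((FSet Fq g).ncard : ℝ) *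
          ((∑ᶠ P ∈ {P : Fq[X] | P.Monic ∧ Irreducible P ∧ P.natDegree = n g},
              ∑ᶠ t ∈ FSet Fq g, chiP P (t.1 * t.2.1) : ℤ) : ℝ))
      Filter.atTop (nhds 0) := by
  subst hFq
  have hodd : Fintype.card Fq % 2 = 1 := Nat.odd_iff.1 hq_odd
  have hq3 : 3 ≤ Fintype.card Fq := by
    have := Fintype.one_lt_card (α := Fq); omega
  obtain ⟨C, G0, hC, hlower⟩ := FF_lower (F := Fq) hq3
  obtain ⟨g0, hlow⟩ := hn_low
  have hlim : Filter.Tendsto (fun g : ℕ => 55404 * (C:ℝ) * (Fintype.card Fq : ℝ)^3 *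
      ((n g : ℝ) / (g : ℝ) ^ ((2 : ℝ) / 3))^3 +
        15625 * (C:ℝ) * (Fintype.card Fq : ℝ)^3 * (g:ℝ)⁻¹) Filter.atTop (nhds 0) := by
    have h1 := (hn_up.pow 3).const_mul (55404 * (C:ℝ) * (Fintype.card Fq : ℝ)^3)
    have h2 := (tendsto_inv_atTop_nhds_zero_nat (𝕜 := ℝ)).const_mul
      (15625 * (C:ℝ) * (Fintype.card Fq : ℝ)^3)
    simpa using h1.add h2
  apply squeeze_zero_norm' _ hlim
  rw [Filter.eventually_atTop]
  refine ⟨max 1 (max G0 g0), fun g hg => ?_⟩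
  have hg1 : 1 ≤ g := (le_max_left _ _).trans hg
  have hg2 : G0 ≤ g := (le_max_left _ _).trans ((le_max_right _ _).trans hg)
  have hg3 : g0 ≤ g := (le_max_right _ _).trans ((le_max_right _ _).trans hg)
  obtain ⟨t, ht⟩ := hn_even g
  have hnt : n g = 2 * t := by omega
  have ht0 : 0 < t := by have := hn_pos g; omega
  have hsum : (∑ᶠ P ∈ {P : Fq[X] | P.Monic ∧ Irreducible P ∧ P.natDegree = n g},
            ∑ᶠ t ∈ FSet Fq g, chiP P (t.1 * t.2.1) : ℤ) =
      ∑ P ∈ Irr Fq (2*t), ∑ x ∈ FF Fq g, chiP P (x.1 * x.2.1) := by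
    have hs : {P : Fq[X] | P.Monic ∧ Irreducible P ∧ P.natDegree = n g} = ↑(Irr Fq (2*t)) := by
      ext P
      rw [Finset.mem_coe, mem_Irr, ← hnt]
      show (_ ∧ _ ∧ _) ↔ _
      tauto
    rw [hs, finsum_mem_coe_finset]
    apply Finset.sum_congr rfl
    intro P _
    rw [coe_FF, finsum_mem_coe_finset]
  rw [hsum, coe_FF, Set.ncard_coe_finset, Real.norm_eq_abs]
  have hlogq : 0 < Real.log (Fintype.card Fq : ℝ) :=
    Real.log_pos (by exact_mod_cast (by omega : 1 < Fintype.card Fq))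
  have hgp : (0:ℝ) < g := by exact_mod_cast hg1
  have hpow : (g:ℝ)^3 ≤ (Fintype.card Fq : ℝ)^(2*t) := by
    have h1 := hlow g hg3
    rw [div_le_iff₀ hlogq] at h1
    rw [← Real.log_le_log_iff (by positivity) (by positivity), Real.log_pow, Real.log_pow, ← hnt]
    exact_mod_cast h1
  have hfb := final_bound hodd hq3 ht0 hg1 (hlower g hg2) hpow
  have hn2 : n g / 2 = t := by omega
  have hrp : ((n g : ℝ) / (g : ℝ) ^ ((2 : ℝ) / 3))^3 = ((2*t:ℕ):ℝ)^3 / (g:ℝ)^2 := by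
    rw [div_pow, hnt, ← Real.rpow_natCast ((g:ℝ) ^ ((2:ℝ)/3)) 3, ← Real.rpow_mul hgp.le]
    norm_num
  rw [hn2, hrp, hnt]
  exact hfb
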